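/- arXiv:1812.09083 — 15 statements merged into one kernel-verified Lean document; each statement's English description precedes it below -/
import Mathlib

section
/- Let d ≥ 1 and M ≥ 1, and let ρ⁽¹⁾, …, ρ⁽ᴹ⁾ be density matrices of size d that are pairwise orthogonal (ρ⁽ᵐ⁾ · ρ⁽ⁿ⁾ = 0 for all m ≠ n) and share the same classical version, i.e. there is p : Fin d → ℝ with (ρ⁽ⁿ⁾)ₖₖ = p k for all n and k. Then p k ≤ 1/M for every k. -/
open scoped Matrix ComplexConjugate ComplexOrder

lemma sq_diag_aux {d : ℕ} (A : Matrix (Fin d) (Fin d) ℂ) (hA : A.IsHermitian) (k : Fin d) :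
    (A * A) k k = ((∑ j, Complex.normSq (A k j) : ℝ) : ℂ) := by
  rw [Matrix.mul_apply]
  push_cast
  refine Finset.sum_congr rfl fun j _ => ?_
  rw [← hA.apply j k, Complex.normSq_eq_conj_mul_self, mul_comm]
  rfl

lemma minor_aux {d : ℕ} (A : Matrix (Fin d) (Fin d) ℂ) (hA : A.PosSemidef) (p : Fin d → ℝ)
    (hp : ∀ k, A k k = (p k : ℂ)) (k j : Fin d) :
    Complex.normSq (A k j) ≤ p k * p j := by
  have h := (hA.submatrix ![k, j]).det_nonneg
  rw [Matrix.det_fin_two] at h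
  simp only [Matrix.submatrix_apply, Matrix.cons_val_zero, Matrix.cons_val_one] at h
  rw [hp, hp, ← hA.isHermitian.apply j k] at h
  have e : A k j * star (A k j) = ((Complex.normSq (A k j) : ℝ) : ℂ) := by
    rw [Complex.normSq_eq_conj_mul_self, mul_comm]; rfl
  rw [e] at h
  have h2 : (0:ℂ) ≤ ((p k * p j - Complex.normSq (A k j) : ℝ) : ℂ) := by
    push_cast; exact h
  have := Complex.zero_le_real.mp h2
  linarith

theorem stmt_0 (d M : ℕ) (hd : 1 ≤ d) (hM : 1 ≤ M)
    (ρ : Fin M → Matrix (Fin d) (Fin d) ℂ)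
    (hpos : ∀ n, (ρ n).PosSemidef)
    (htr : ∀ n, (ρ n).trace = 1)
    (horth : ∀ m n : Fin M, m ≠ n → ρ m * ρ n = 0)
    (p : Fin d → ℝ)
    (hdiag : ∀ (n : Fin M) (k : Fin d), ρ n k k = (p k : ℂ)) :
    ∀ k : Fin d, p k ≤ 1 / M := by
  intro k
  have hsum : ∑ j, p j = 1 := by
    have h := htr ⟨0, hM⟩
    simp only [Matrix.trace, Matrix.diag_apply, hdiag] at h
    exact_mod_cast h
  have hrow : ∀ n, ∑ j, Complex.normSq (ρ n k j) ≤ p k := fun n =>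
    calc ∑ j, Complex.normSq (ρ n k j) ≤ ∑ j, p k * p j :=
          Finset.sum_le_sum fun j _ => minor_aux _ (hpos n) p (hdiag n) k j
      _ = p k := by rw [← Finset.mul_sum, hsum, mul_one]
  have hS : (∑ n, ρ n).IsHermitian := by
    unfold Matrix.IsHermitian
    rw [Matrix.conjTranspose_sum]
    exact Finset.sum_congr rfl fun n _ => (hpos n).isHermitian
  have hSS : (∑ n, ρ n) * (∑ n, ρ n) = ∑ n, ρ n * ρ n := by
    rw [Finset.sum_mul_sum]
    refine Finset.sum_congr rfl fun m _ => ?_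
    exact Finset.sum_eq_single m (fun n _ h => horth m n (Ne.symm h)) (by simp)
  have hSk : (∑ n, ρ n) k k = ((M * p k : ℝ) : ℂ) := by
    simp [Matrix.sum_apply, hdiag]
  have heq : ∑ j, Complex.normSq ((∑ n, ρ n) k j) = ∑ n, ∑ j, Complex.normSq (ρ n k j) := by
    have h := sq_diag_aux _ hS k
    rw [hSS, Matrix.sum_apply,
      Finset.sum_congr rfl fun n _ => sq_diag_aux _ (hpos n).isHermitian k] at h
    exact_mod_cast h.symm
  have h1 : (M * p k) * (M * p k) ≤ ∑ j, Complex.normSq ((∑ n, ρ n) k j) := by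
    have := Finset.single_le_sum (f := fun j => Complex.normSq ((∑ n, ρ n) k j))
      (fun j _ => Complex.normSq_nonneg _) (Finset.mem_univ k)
    simp only [hSk, Complex.normSq_ofReal] at this
    exact this
  have h2 : ∑ n, ∑ j, Complex.normSq (ρ n k j) ≤ M * p k := by
    calc _ ≤ ∑ n : Fin M, p k := Finset.sum_le_sum fun n _ => hrow n
      _ = M * p k := by simp
  have hMpos : (0:ℝ) < M := by exact_mod_cast hM
  rw [le_div_iff₀ hMpos]
  by_contra hc
  push Not at hc
  nlinarith
end

section
/- Let p be a probability vector of dimension d, let 1 ≤ M ≤ d, and suppose p k* = 1/M for some index k*. If there exist M density matrices ρ⁽¹⁾, …, ρ⁽ᴹ⁾ of size d that are pairwise orthogonal (ρ⁽ᵐ⁾ · ρ⁽ⁿ⁾ = 0 for m ≠ n) and all have classical version p (i.e. (ρ⁽ⁿ⁾)ₖₖ = p k for all n, k), then there exist M orthonormal vectors ψ⁽¹⁾, …, ψ⁽ᴹ⁾ in ℂᵈ with |ψ⁽ⁿ⁾ₖ|² = p k for all k and n. -/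
open scoped Matrix ComplexConjugate ComplexOrder

/-- 2 × 2 minors of a positive semidefinite matrix. -/
lemma psd_minor {d : ℕ} {A : Matrix (Fin d) (Fin d) ℂ} (hA : A.PosSemidef) (i j : Fin d) :
    A i j * A j i ≤ A i i * A j j := by
  have h := (hA.submatrix ![i, j]).det_nonneg
  rw [Matrix.det_fin_two] at h
  simpa using h

lemma psd_sq_le {d : ℕ} {A : Matrix (Fin d) (Fin d) ℂ} (hA : A.PosSemidef) (ht : A.trace = 1)
    (k : Fin d) : (A * A) k k ≤ A k k := by
  calc (A * A) k k = ∑ j, A k j * A j k := by rw [Matrix.mul_apply]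
    _ ≤ ∑ j, A k k * A j j := Finset.sum_le_sum fun j _ => psd_minor hA k j
    _ = A k k * A.trace := by rw [← Finset.mul_sum]; rfl
    _ = A k k := by rw [ht, mul_one]

lemma pure_of_fixed {d : ℕ} {A : Matrix (Fin d) (Fin d) ℂ} (hA : A.PosSemidef)
    (ht : A.trace = 1) (k : Fin d) (M : ℝ) (hM : M ≠ 0) (hk : A k k = ((1 / M : ℝ) : ℂ))
    (hfix : ∀ i, (A * A) i k = A i k) (i : Fin d) :
    (M : ℂ) * (A i k * A k i) = A i i := by
  have hMc : (M : ℂ) ≠ 0 := by exact_mod_cast hM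
  have hH : Aᴴ = A := hA.1
  have hHa : ∀ a b, star (A a b) = A b a := fun a b => by
    conv_rhs => rw [← hH]
    rfl
  set Q : Matrix (Fin d) (Fin d) ℂ := Matrix.of fun a b => (M : ℂ) * (A a k * A k b) with hQ
  have hQH : Qᴴ = Q := by
    ext a b
    simp only [hQ, Matrix.conjTranspose_apply, Matrix.of_apply, star_mul', hHa]
    simp [mul_comm]
  have hAQ : A * Q = Q := by
    ext a b
    have := hfix a
    rw [Matrix.mul_apply] at this ⊢
    simp only [hQ, Matrix.of_apply]
    rw [← this, Finset.sum_mul, Finset.mul_sum]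
    exact Finset.sum_congr rfl fun x _ => by ring
  have hQA : Q * A = Q := by
    have := congrArg Matrix.conjTranspose hAQ
    rwa [Matrix.conjTranspose_mul, hQH, hH] at this
  have hQQ : Q * Q = Q := by
    ext a b
    have := hfix k
    rw [Matrix.mul_apply] at this ⊢
    simp only [hQ, Matrix.of_apply]
    calc _ = ∑ x, (M : ℂ) * M * (A a k * A k b) * (A k x * A x k) :=
          Finset.sum_congr rfl fun x _ => by ring
      _ = _ := by
        rw [← Finset.mul_sum, this, hk]; push_cast; field_simp
  have hps : (A - Q).PosSemidef := by
    have := hA.conjTranspose_mul_mul_same (1 - Q)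
    have e : (1 - Q)ᴴ * A * (1 - Q) = A - Q := by
      rw [Matrix.conjTranspose_sub, hQH, Matrix.conjTranspose_one, sub_mul, one_mul, hQA,
        mul_sub, mul_one, sub_mul, hAQ, hQQ]
      simp
    rwa [e] at this
  have htrQ : Q.trace = 1 := by
    have := hfix k
    rw [Matrix.mul_apply] at this
    calc Q.trace = ∑ x, (M : ℂ) * (A k x * A x k) :=
          Finset.sum_congr rfl fun x _ => by simp [hQ, mul_comm]
      _ = 1 := by rw [← Finset.mul_sum, this, hk]; push_cast; field_simp
  have hz : A - Q = 0 := by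
    rw [← hps.trace_eq_zero_iff, Matrix.trace_sub, ht, htrQ, sub_self]
  have := congrFun (congrFun (sub_eq_zero.mp hz) i) i
  rw [this]; rfl

theorem stmt_2 (d M : ℕ) (hM : 1 ≤ M) (hMd : M ≤ d)
    (p : Fin d → ℝ) (hp0 : ∀ k, 0 ≤ p k) (hp1 : ∑ k, p k = 1)
    (kstar : Fin d) (hkstar : p kstar = 1 / M)
    (ρ : Fin M → Matrix (Fin d) (Fin d) ℂ)
    (hpos : ∀ n, (ρ n).PosSemidef)
    (htr : ∀ n, (ρ n).trace = 1)
    (horth : ∀ m n : Fin M, m ≠ n → ρ m * ρ n = 0)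
    (hdiag : ∀ (n : Fin M) (k : Fin d), ρ n k k = (p k : ℂ)) :
    ∃ ψ : Fin M → Fin d → ℂ,
      (∀ m n : Fin M, ∑ k, conj (ψ m k) * ψ n k = if m = n then 1 else 0) ∧
      (∀ (n : Fin M) (k : Fin d), ‖ψ n k‖ ^ 2 = p k) := by
  have hM0 : (M : ℝ) ≠ 0 := by positivity
  have hMc : (M : ℂ) ≠ 0 := by exact_mod_cast hM0
  have hHa : ∀ n a b, star (ρ n a b) = ρ n b a := fun n a b => by
    conv_rhs => rw [← (hpos n).1]
    rfl
  have hkk : ∀ n, ρ n kstar kstar = ((1 / (M : ℝ) : ℝ) : ℂ) := fun n => by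
    rw [hdiag, hkstar]
  set S : Matrix (Fin d) (Fin d) ℂ := ∑ n, ρ n with hS
  have hρS : ∀ n, ρ n * S = ρ n * ρ n := fun n => by
    rw [hS, Finset.mul_sum, Finset.sum_eq_single n]
    · intro m _ hm
      exact horth n m hm.symm
    · simp
  have hSkk : S kstar kstar = 1 := by
    rw [hS, Matrix.sum_apply]
    simp only [hkk]
    simp [hMc]
  have hSH : ∀ a b, star (S a b) = S b a := fun a b => by
    simp only [hS, Matrix.sum_apply, star_sum, hHa]
  have hSS : (S * S) kstar kstar ≤ 1 := by
    have e : S * S = ∑ n, ρ n * ρ n := by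
      conv_lhs => rw [hS, Finset.sum_mul]
      exact Finset.sum_congr rfl fun n _ => hρS n
    rw [e, Matrix.sum_apply, ← hSkk, hS, Matrix.sum_apply]
    exact Finset.sum_le_sum fun n _ => psd_sq_le (hpos n) (htr n) kstar
  have hcol : ∀ j, j ≠ kstar → S j kstar = 0 := by
    have hsum : ∑ j, ‖S j kstar‖ ^ 2 ≤ 1 := by
      have e : (S * S) kstar kstar = ((∑ j, ‖S j kstar‖ ^ 2 : ℝ) : ℂ) := by
        rw [Matrix.mul_apply]
        push_cast
        refine Finset.sum_congr rfl fun j _ => ?_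
        rw [← hSH j kstar, ← Complex.conj_mul']
        rfl
      rw [e] at hSS
      exact_mod_cast hSS
    intro j hj
    rw [← Finset.add_sum_erase _ _ (Finset.mem_univ kstar), hSkk] at hsum
    have h1 : ‖S j kstar‖ ^ 2 ≤ ∑ x ∈ Finset.univ.erase kstar, ‖S x kstar‖ ^ 2 :=
      Finset.single_le_sum (f := fun x => ‖S x kstar‖ ^ 2) (fun x _ => by positivity)
        (Finset.mem_erase.mpr ⟨hj, Finset.mem_univ j⟩)
    have h2 : ‖S j kstar‖ ^ 2 ≤ 0 := by
      simp only [norm_one] at hsum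
      linarith
    have h3 : ‖S j kstar‖ = 0 := by nlinarith [norm_nonneg (S j kstar)]
    exact norm_eq_zero.mp h3
  have hfix : ∀ n i, (ρ n * ρ n) i kstar = ρ n i kstar := fun n i => by
    rw [← hρS, Matrix.mul_apply, Finset.sum_eq_single kstar]
    · rw [hSkk, mul_one]
    · intro b _ hb
      rw [hcol b hb, mul_zero]
    · simp
  have hsq : ((√(M : ℝ) : ℝ) : ℂ) * ((√(M : ℝ) : ℝ) : ℂ) = M := by
    rw [← Complex.ofReal_mul, Real.mul_self_sqrt (by positivity)]
    simp
  have hstar : ∀ n k, conj (ρ n k kstar) = ρ n kstar k := fun n k => hHa n k kstar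
  refine ⟨fun n k => ((√(M : ℝ) : ℝ) : ℂ) * ρ n k kstar, fun m n => ?_, fun n k => ?_⟩
  · have e : ∑ k, conj (((√(M : ℝ) : ℝ) : ℂ) * ρ m k kstar) * (((√(M : ℝ) : ℝ) : ℂ) * ρ n k kstar)
        = (M : ℂ) * (ρ m * ρ n) kstar kstar := by
      rw [Matrix.mul_apply, Finset.mul_sum]
      refine Finset.sum_congr rfl fun k _ => ?_
      rw [map_mul, Complex.conj_ofReal, hstar, ← hsq]
      ring
    rw [e]
    split_ifs with h
    · subst h
      rw [hfix, hkk]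
      push_cast
      field_simp
    · rw [horth m n h]
      simp
  · have h := pure_of_fixed (hpos n) (htr n) kstar (M : ℝ) hM0 (hkk n) (hfix n) k
    rw [hdiag n k] at h
    have : ((‖((√(M : ℝ) : ℝ) : ℂ) * ρ n k kstar‖ ^ 2 : ℝ) : ℂ) = (p k : ℂ) := by
      rw [← h]
      push_cast
      rw [← Complex.conj_mul', map_mul, Complex.conj_ofReal, hstar, ← hsq]
      ring
    exact_mod_cast this
end

section
/- Let p be a probability vector of dimension d such that p k ≤ 1/2 for every k. Then there exist real phases φ₁, …, φ_d such that ∑ₖ p k · exp(i φₖ) = 0 (as a complex number). -/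
open scoped ComplexConjugate

lemma tri_aux (z : ℂ) (a t : ℝ) (ha : 0 ≤ a) (h1 : ‖z‖ - a ≤ t) (h2 : a - ‖z‖ ≤ t)
    (h3 : t ≤ ‖z‖ + a) :
    ∃ θ : ℝ, ‖z - (a : ℂ) * Complex.exp (Complex.I * (θ : ℂ))‖ = t := by
  have hz : (‖z‖ : ℂ) * Complex.exp (Complex.I * (z.arg : ℂ)) = z := by
    rw [mul_comm Complex.I]; exact Complex.norm_mul_exp_arg_mul_I z
  have hn : ‖Complex.exp (Complex.I * (z.arg : ℂ))‖ = 1 := by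
    rw [mul_comm]; exact Complex.norm_exp_ofReal_mul_I _
  have hc : Continuous fun θ : ℝ => ‖z - (a : ℂ) * Complex.exp (Complex.I * (θ : ℂ))‖ := by
    fun_prop
  refine mem_range_of_exists_le_of_exists_ge hc ⟨z.arg, ?_⟩ ⟨z.arg + Real.pi, ?_⟩
  · have : z - (a : ℂ) * Complex.exp (Complex.I * (z.arg : ℂ))
        = ((‖z‖ - a : ℝ) : ℂ) * Complex.exp (Complex.I * (z.arg : ℂ)) := by
      nth_rewrite 1 [← hz]
      push_cast
      ring
    rw [this, norm_mul, hn, Complex.norm_real, mul_one, Real.norm_eq_abs, abs_le]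
    constructor <;> linarith
  · have : z - (a : ℂ) * Complex.exp (Complex.I * ((z.arg + Real.pi : ℝ) : ℂ))
        = ((‖z‖ + a : ℝ) : ℂ) * Complex.exp (Complex.I * (z.arg : ℂ)) := by
      nth_rewrite 1 [← hz]
      push_cast
      rw [mul_add, Complex.exp_add, mul_comm Complex.I (Real.pi : ℂ), Complex.exp_pi_mul_I]
      ring
    rw [this, norm_mul, hn, Complex.norm_real, mul_one, Real.norm_eq_abs]
    exact h3.trans (le_abs_self _)

lemma poly_aux {ι : Type*} [DecidableEq ι] (p : ι → ℝ) (hp0 : ∀ k, 0 ≤ p k) (s : Finset ι) :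
    ∀ z : ℂ, ‖z‖ ≤ ∑ k ∈ s, p k → (∀ k ∈ s, 2 * p k ≤ ‖z‖ + ∑ k ∈ s, p k) →
    ∃ φ : ι → ℝ, ∑ k ∈ s, (p k : ℂ) * Complex.exp (Complex.I * (φ k : ℂ)) = z := by
  induction s using Finset.induction_on with
  | empty =>
    intro z hz _
    refine ⟨fun _ => 0, ?_⟩
    simpa [eq_comm] using hz
  | insert a s ha ih =>
    intro z hz hk
    rw [Finset.sum_insert ha] at hz hk
    have hS : 0 ≤ ∑ k ∈ s, p k := Finset.sum_nonneg fun k _ => hp0 k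
    have hka := hk a (Finset.mem_insert_self a s)
    have hpa := hp0 a
    have hz0 := norm_nonneg z
    obtain ⟨θ, hθ⟩ := tri_aux z (p a) (min (∑ k ∈ s, p k) (‖z‖ + p a)) hpa
      (le_min (by linarith) (by linarith)) (le_min (by linarith) (by linarith)) (min_le_right _ _)
    obtain ⟨φ, hφ⟩ := ih (z - (p a : ℂ) * Complex.exp (Complex.I * (θ : ℂ)))
      (by rw [hθ]; exact min_le_left _ _)
      (by
        intro k hks
        have h1 := hk k (Finset.mem_insert_of_mem hks)
        have h2 : p k ≤ ∑ k ∈ s, p k := Finset.single_le_sum (fun k _ => hp0 k) hks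
        have : 2 * p k - ∑ k ∈ s, p k ≤ min (∑ k ∈ s, p k) (‖z‖ + p a) :=
          le_min (by linarith) (by linarith)
        rw [hθ]
        linarith)
    refine ⟨Function.update φ a θ, ?_⟩
    rw [Finset.sum_insert ha, Function.update_self]
    have : ∑ k ∈ s, (p k : ℂ) * Complex.exp (Complex.I * (Function.update φ a θ k : ℂ))
        = ∑ k ∈ s, (p k : ℂ) * Complex.exp (Complex.I * (φ k : ℂ)) := by
      refine Finset.sum_congr rfl fun k hks => ?_
      have hne : k ≠ a := fun h => ha (h ▸ hks)
      rw [Function.update_of_ne hne]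
    rw [this, hφ]
    ring

theorem stmt_3 (d : ℕ)
    (p : Fin d → ℝ) (hp0 : ∀ k, 0 ≤ p k) (hp1 : ∑ k, p k = 1)
    (hhalf : ∀ k, p k ≤ 1 / 2) :
    ∃ φ : Fin d → ℝ, ∑ k, (p k : ℂ) * Complex.exp (Complex.I * (φ k : ℂ)) = 0 := by
  apply poly_aux p hp0 Finset.univ 0
  · rw [hp1, norm_zero]; exact zero_le_one
  · intro k _
    rw [hp1, norm_zero]
    linarith [hhalf k]
end

section
/- Let p be a probability vector of dimension d ≥ 2. There exist two density matrices ρ and σ of size d, both with classical version p (i.e. ρₖₖ = σₖₖ = p k for all k), such that ρ · σ = 0, if and only if p k ≤ 1/2 for every k. (Equivalently, the 2-distinguishability region 𝒜²_d equals the permutohedron 𝒫²_d.) -/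
open scoped Matrix ComplexConjugate ComplexOrder

lemma psd_entry {d : ℕ} {p : Fin d → ℝ} {A : Matrix (Fin d) (Fin d) ℂ} (hA : A.PosSemidef)
    (h : ∀ k, A k k = (p k : ℂ)) (i j : Fin d) : ‖A i j‖ ^ 2 ≤ p i * p j := by
  have h1 := (hA.submatrix ![i, j]).det_nonneg
  rw [Matrix.det_fin_two] at h1
  simp only [Matrix.submatrix_apply, Matrix.cons_val_zero, Matrix.cons_val_one] at h1
  have h2 : A j i = conj (A i j) := (hA.isHermitian.apply j i).symm
  rw [h2, Complex.mul_conj, h, h, Complex.normSq_eq_norm_sq] at h1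
  have h3 : (0 : ℝ) ≤ p i * p j - ‖A i j‖ ^ 2 := by exact_mod_cast h1
  linarith

lemma signs {ι : Type*} [DecidableEq ι] (p : ι → ℝ) (M : ℝ) (hM : 0 ≤ M) (s : Finset ι)
    (h : ∀ k ∈ s, 0 ≤ p k ∧ p k ≤ M) :
    ∃ θ : ι → ℝ, ∃ r : ℝ, |r| ≤ M ∧ ∑ k ∈ s, (p k : ℂ) * Complex.exp (θ k * Complex.I) = r := by
  induction s using Finset.induction_on with
  | empty => exact ⟨fun _ => 0, 0, by simpa using hM, by simp⟩
  | insert a s ha ih =>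
    obtain ⟨θ, r, hr, hs⟩ := ih (fun k hk => h k (Finset.mem_insert_of_mem hk))
    obtain ⟨h0, h1⟩ := h a (Finset.mem_insert_self a s)
    have key : ∀ t : ℝ, ∑ k ∈ s, (p k : ℂ) *
        Complex.exp ((Function.update θ a t k : ℝ) * Complex.I) = r := by
      intro t
      rw [← hs]
      refine Finset.sum_congr rfl fun k hk => ?_
      rw [Function.update_of_ne (ne_of_mem_of_not_mem hk ha)]
    rw [abs_le] at hr
    rcases le_total 0 r with h2 | h2
    · refine ⟨Function.update θ a Real.pi, r - p a, ?_, ?_⟩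
      · rw [abs_le]; constructor <;> linarith
      · rw [Finset.sum_insert ha, key]
        simp [Complex.exp_pi_mul_I]
        ring
    · refine ⟨Function.update θ a 0, r + p a, ?_, ?_⟩
      · rw [abs_le]; constructor <;> linarith
      · rw [Finset.sum_insert ha, key]
        simp
        ring

lemma polygon {d : ℕ} (hd : 2 ≤ d) (p : Fin d → ℝ) (hp0 : ∀ k, 0 ≤ p k)
    (hp1 : ∑ k, p k = 1) (hp : ∀ k, p k ≤ 1 / 2) :
    ∃ z : Fin d → ℂ, (∀ k, z k * conj (z k) = 1) ∧ ∑ k, (p k : ℂ) * z k = 0 := by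
  haveI : Nonempty (Fin d) := ⟨⟨0, by omega⟩⟩
  obtain ⟨m, hm⟩ := Finite.exists_max p
  obtain ⟨θ, r, hr, hs⟩ := signs p (p m) (hp0 m) (Finset.univ.erase m)
    (fun k _ => ⟨hp0 k, hm k⟩)
  let S : ℝ → ℂ := fun t => ∑ k ∈ Finset.univ.erase m, (p k : ℂ) *
    Complex.exp ((t * θ k : ℝ) * Complex.I)
  have hrest : ∑ k ∈ Finset.univ.erase m, p k = 1 - p m := by
    rw [← hp1, ← Finset.add_sum_erase _ _ (Finset.mem_univ m)]; ring
  have hS0 : ‖S 0‖ = 1 - p m := by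
    have : S 0 = ((1 - p m : ℝ) : ℂ) := by
      rw [← hrest]; simp [S]
    rw [this, Complex.norm_real, Real.norm_eq_abs, abs_of_nonneg]
    linarith [hp m]
  have hS1 : ‖S 1‖ ≤ p m := by
    have : S 1 = r := by rw [← hs]; simp [S]
    rw [this, Complex.norm_real]; exact hr
  have hc : Continuous fun t => ‖S t‖ := by
    simp only [S]; fun_prop
  obtain ⟨t, -, ht⟩ := intermediate_value_Icc' (zero_le_one' ℝ) hc.continuousOn
    (show p m ∈ Set.Icc (‖S 1‖) (‖S 0‖) from ⟨hS1, by rw [hS0]; linarith [hp m]⟩)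
  have hE : ∀ x : ℝ, Complex.exp (x * Complex.I) * conj (Complex.exp (x * Complex.I)) = 1 := by
    intro x
    rw [Complex.mul_conj, Complex.normSq_eq_norm_sq, Complex.norm_exp_ofReal_mul_I]; simp
  refine ⟨Function.update (fun k => Complex.exp ((t * θ k : ℝ) * Complex.I)) m
    (-Complex.exp ((S t).arg * Complex.I)), ?_, ?_⟩
  · intro k
    by_cases hk : k = m
    · subst hk
      rw [Function.update_self, map_neg, neg_mul_neg, hE]
    · rw [Function.update_of_ne hk, hE]
  · rw [← Finset.add_sum_erase _ _ (Finset.mem_univ m), Function.update_self]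
    have : ∑ k ∈ Finset.univ.erase m, (p k : ℂ) * Function.update
        (fun k => Complex.exp ((t * θ k : ℝ) * Complex.I)) m
        (-Complex.exp ((S t).arg * Complex.I)) k = S t := by
      refine Finset.sum_congr rfl fun k hk => ?_
      rw [Function.update_of_ne (Finset.ne_of_mem_erase hk)]
    rw [this]
    have h2 := Complex.norm_mul_exp_arg_mul_I (S t)
    simp only at ht
    rw [ht] at h2
    linear_combination -h2

theorem stmt_4 (d : ℕ) (hd : 2 ≤ d)
    (p : Fin d → ℝ) (hp0 : ∀ k, 0 ≤ p k) (hp1 : ∑ k, p k = 1) :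
    (∃ ρ σ : Matrix (Fin d) (Fin d) ℂ,
      ρ.PosSemidef ∧ ρ.trace = 1 ∧ σ.PosSemidef ∧ σ.trace = 1 ∧
      (∀ k : Fin d, ρ k k = (p k : ℂ)) ∧ (∀ k : Fin d, σ k k = (p k : ℂ)) ∧
      ρ * σ = 0) ↔
    (∀ k, p k ≤ 1 / 2) := by
  constructor
  · rintro ⟨ρ, σ, hρ, -, hσ, -, hρp, hσp, h0⟩ k
    have h1 : (ρ * σ) k k = 0 := by rw [h0]; rfl
    rw [Matrix.mul_apply, ← Finset.add_sum_erase _ _ (Finset.mem_univ k), hρp, hσp] at h1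
    have hrest : ∑ j ∈ Finset.univ.erase k, p j = 1 - p k := by
      rw [← hp1, ← Finset.add_sum_erase _ _ (Finset.mem_univ k)]; ring
    have h2 : p k * p k ≤ p k * (1 - p k) := by
      calc p k * p k = ‖(p k : ℂ) * p k‖ := by
            rw [norm_mul, Complex.norm_real, Real.norm_eq_abs, abs_of_nonneg (hp0 k)]
        _ = ‖∑ j ∈ Finset.univ.erase k, ρ k j * σ j k‖ := by
            rw [eq_neg_of_add_eq_zero_left h1, norm_neg]
        _ ≤ ∑ j ∈ Finset.univ.erase k, p k * p j := by
            refine norm_sum_le_of_le _ fun j _ => ?_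
            rw [norm_mul]
            have ha := psd_entry hρ hρp k j
            have hb := psd_entry hσ hσp j k
            nlinarith [sq_nonneg (‖ρ k j‖ - ‖σ j k‖)]
        _ = p k * (1 - p k) := by rw [← Finset.mul_sum, hrest]
    by_contra! h
    nlinarith
  · intro hp
    obtain ⟨z, hz, hs⟩ := polygon hd p hp0 hp1 hp
    have hq : ∀ k, ((√(p k) : ℝ) : ℂ) * ((√(p k) : ℝ) : ℂ) = p k := fun k => by
      rw [← Complex.ofReal_mul, Real.mul_self_sqrt (hp0 k)]
    let u : Fin d → ℂ := fun k => (√(p k) : ℝ)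
    let v : Fin d → ℂ := fun k => (√(p k) : ℝ) * z k
    have hu : ∀ k, Matrix.vecMulVec u (star u) k k = (p k : ℂ) := fun k => by
      simp [Matrix.vecMulVec_apply, u, hq]
    have hv : ∀ k, Matrix.vecMulVec v (star v) k k = (p k : ℂ) := fun k => by
      simp only [Matrix.vecMulVec_apply, v, Pi.star_apply, star_mul', RCLike.star_def,
        Complex.conj_ofReal]
      linear_combination (z k * conj (z k)) * hq k + (p k : ℂ) * hz k
    refine ⟨Matrix.vecMulVec u (star u), Matrix.vecMulVec v (star v),
      Matrix.posSemidef_vecMulVec_self_star u, ?_, Matrix.posSemidef_vecMulVec_self_star v, ?_,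
      hu, hv, ?_⟩
    · simp only [Matrix.trace, Matrix.diag_apply, hu]; exact_mod_cast hp1
    · simp only [Matrix.trace, Matrix.diag_apply, hv]; exact_mod_cast hp1
    · have : star u ⬝ᵥ v = 0 := by
        rw [← hs]
        refine Finset.sum_congr rfl fun k _ => ?_
        simp only [u, v, Pi.star_apply, RCLike.star_def, Complex.conj_ofReal]
        rw [← mul_assoc, hq]
      rw [Matrix.vecMulVec_mul_vecMulVec, this]
      simp
end

section
/- Let p be a probability vector of dimension d ≥ 1. There exist d density matrices ρ⁽¹⁾, …, ρ⁽ᵈ⁾ of size d, all with classical version p and pairwise orthogonal (ρ⁽ᵐ⁾ · ρ⁽ⁿ⁾ = 0 for m ≠ n), if and only if p is the uniform distribution, p k = 1/d for every k. (Equivalently, the d-distinguishability region 𝒜ᵈ_d equals the permutohedron 𝒫ᵈ_d = {η}.) -/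
open scoped Matrix ComplexConjugate ComplexOrder

theorem aux_forward (d : ℕ) (hd : 1 ≤ d)
    (p : Fin d → ℝ) (hp1 : ∑ k, p k = 1)
    (ρ : Fin d → Matrix (Fin d) (Fin d) ℂ)
    (h1 : ∀ n, (ρ n).PosSemidef) (h2 : ∀ n, (ρ n).trace = 1)
    (h3 : ∀ (n : Fin d) (k : Fin d), ρ n k k = (p k : ℂ))
    (h4 : ∀ m n : Fin d, m ≠ n → ρ m * ρ n = 0) (l : Fin d) : p l = 1 / d := by
  obtain ⟨k, hk⟩ : ∃ k, p k ≠ 0 := by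
    by_contra! h
    simp [h] at hp1
  have hD : ∀ n, (ρ n * ρ n) k k ≠ 0 := by
    intro n h
    have hh : (ρ n * ρ n) k k = ((∑ i, Complex.normSq (ρ n i k) : ℝ) : ℂ) := by
      rw [Matrix.mul_apply]
      push_cast
      refine Finset.sum_congr rfl fun i _ => ?_
      rw [Complex.normSq_eq_conj_mul_self]
      congr 1
      exact ((h1 n).1.apply k i).symm
    rw [hh, Complex.ofReal_eq_zero,
      Finset.sum_eq_zero_iff_of_nonneg (fun i _ => Complex.normSq_nonneg _)] at h
    have := h k (Finset.mem_univ _)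
    rw [Complex.normSq_eq_zero, h3] at this
    exact hk (by exact_mod_cast this)
  let V : Matrix (Fin d) (Fin d) ℂ := Matrix.of fun i n => ρ n i k
  let W : Matrix (Fin d) (Fin d) ℂ := Matrix.of fun n i => ((ρ n * ρ n) k k)⁻¹ * ρ n k i
  have hWX : ∀ X : Matrix (Fin d) (Fin d) ℂ, ∀ a b,
      (W * X * V) a b = ((ρ a * ρ a) k k)⁻¹ * (ρ a * X * ρ b) k k := by
    intro X a b
    simp only [Matrix.mul_apply, W, V, Matrix.of_apply, Finset.mul_sum, Finset.sum_mul, mul_assoc]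
  have hWV : W * V = 1 := by
    ext a b
    have := hWX 1 a b
    rw [Matrix.mul_one, Matrix.mul_one] at this
    rw [this]
    by_cases hab : a = b
    · subst hab
      rw [Matrix.one_apply_eq, inv_mul_cancel₀ (hD a)]
    · rw [h4 a b hab, Matrix.one_apply_ne hab]; simp
  have hVW : V * W = 1 := mul_eq_one_comm.mp hWV
  have hz : ∀ m a b, (a ≠ m ∨ b ≠ m) → (W * ρ m * V) a b = 0 := by
    intro m a b hab
    rw [hWX]
    rcases hab with h | h
    · rw [h4 a m h]; simp
    · rw [Matrix.mul_assoc, h4 m b h.symm]; simp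
  have hone : ∀ m, (W * ρ m * V) m m = 1 := by
    intro m
    have ht : (W * ρ m * V).trace = 1 := by
      rw [Matrix.mul_assoc, Matrix.trace_mul_comm, Matrix.mul_assoc, hVW, Matrix.mul_one, h2]
    rw [Matrix.trace, Finset.sum_eq_single m] at ht
    · exact ht
    · intro b _ hb
      exact hz m b b (Or.inl hb)
    · simp
  have hS : W * (∑ m, ρ m) * V = 1 := by
    rw [Finset.mul_sum, Finset.sum_mul]
    ext a b
    rw [Matrix.sum_apply, Finset.sum_eq_single a]
    · by_cases hab : a = b
      · subst hab
        rw [hone, Matrix.one_apply_eq]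
      · rw [hz a a b (Or.inr (Ne.symm hab)), Matrix.one_apply_ne hab]
    · intro c _ hc
      exact hz c a b (Or.inl hc.symm)
    · simp
  have hS1 : ∑ m, ρ m = 1 := by
    calc ∑ m, ρ m = (V * W) * (∑ m, ρ m) * (V * W) := by rw [hVW]; simp
      _ = V * (W * (∑ m, ρ m) * V) * W := by simp only [Matrix.mul_assoc]
      _ = 1 := by rw [hS, Matrix.mul_one, hVW]
  have := congrFun (congrFun hS1 l) l
  rw [Matrix.sum_apply, Matrix.one_apply_eq] at this
  simp only [h3, Finset.sum_const, Finset.card_univ, Fintype.card_fin, nsmul_eq_mul] at this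
  have h' : (d : ℝ) * p l = 1 := by exact_mod_cast this
  have hd0 : (d : ℝ) ≠ 0 := by positivity
  field_simp
  linarith

theorem aux_backward (d : ℕ) (hd : 1 ≤ d) :
    ∃ ρ : Fin d → Matrix (Fin d) (Fin d) ℂ,
      (∀ n, (ρ n).PosSemidef) ∧ 
      (∀ (n : Fin d) (k : Fin d), ρ n k k = 1 / d) ∧
      (∀ m n : Fin d, m ≠ n → ρ m * ρ n = 0) := by
  have hd0 : d ≠ 0 := by omega
  have hz := Complex.isPrimitiveRoot_exp d hd0
  set z := Complex.exp (2 * Real.pi * Complex.I / d) with hzdef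
  have hn : ‖z‖ = 1 := hz.norm'_eq_one hd0
  have hz0 : z ≠ 0 := hz.ne_zero hd0
  have hc : star z = z⁻¹ := (Complex.inv_eq_conj hn).symm
  let v : Fin d → Fin d → ℂ := fun n i => z ^ ((n : ℕ) * (i : ℕ))
  refine ⟨fun n => (1 / d : ℂ) • Matrix.vecMulVec (v n) (star (v n)), ?_, ?_, ?_⟩
  · intro n
    refine (Matrix.posSemidef_vecMulVec_self_star (v n)).smul ?_
    have : (0 : ℝ) ≤ 1 / d := by positivity
    have h' := Complex.zero_le_real.mpr this
    push_cast at h'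
    exact h'
  · intro n k
    simp [Matrix.vecMulVec_apply, v, hc, hz0]
  · intro m n hmn
    have h : star (v m) ⬝ᵥ v n = 0 := by
      have e : star (v m) ⬝ᵥ v n = ∑ j ∈ Finset.range d, ((z ^ (m : ℕ))⁻¹ * z ^ (n : ℕ)) ^ j := by
        rw [dotProduct, ← Fin.sum_univ_eq_sum_range]
        refine Finset.sum_congr rfl fun i _ => ?_
        simp only [Pi.star_apply, v, star_pow, hc]
        rw [mul_pow, inv_pow, inv_pow, ← pow_mul, ← pow_mul]
      have hne : (z ^ (m : ℕ))⁻¹ * z ^ (n : ℕ) ≠ 1 := by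
        intro h
        rw [inv_mul_eq_one₀ (pow_ne_zero _ hz0)] at h
        exact hmn (Fin.ext (hz.pow_inj m.2 n.2 h))
      rw [e, geom_sum_eq hne, mul_pow, inv_pow, ← pow_mul, ← pow_mul, mul_comm, mul_comm _ d,
        mul_comm _ d, pow_mul, pow_mul, hz.pow_eq_one]
      simp
    simp [Matrix.vecMulVec_mul_vecMulVec, h]

theorem stmt_5 (d : ℕ) (hd : 1 ≤ d)
    (p : Fin d → ℝ) (hp0 : ∀ k, 0 ≤ p k) (hp1 : ∑ k, p k = 1) :
    (∃ ρ : Fin d → Matrix (Fin d) (Fin d) ℂ,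
      (∀ n, (ρ n).PosSemidef) ∧ (∀ n, (ρ n).trace = 1) ∧
      (∀ (n : Fin d) (k : Fin d), ρ n k k = (p k : ℂ)) ∧
      (∀ m n : Fin d, m ≠ n → ρ m * ρ n = 0)) ↔
    (∀ k, p k = 1 / d) := by
  constructor
  · rintro ⟨ρ, h1, h2, h3, h4⟩ l
    exact aux_forward d hd p hp1 ρ h1 h2 h3 h4 l
  · intro h
    obtain ⟨ρ, h1, h3, h4⟩ := aux_backward d hd
    refine ⟨ρ, h1, ?_, ?_, h4⟩
    · intro n
      have hd0 : (d : ℂ) ≠ 0 := by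
        have : d ≠ 0 := by omega
        exact_mod_cast this
      simp [Matrix.trace, h3, hd0]
    · intro n k
      rw [h3, h]
      push_cast
      rfl
end

section
/- Let d > 2 be even and define the probability vector p of dimension d by p k = 2/(3(d−1)) for k ∈ {1,2,3} and p k = 1/(d−1) for k ∈ {4,…,d}. Then p k ≤ 1/(d−1) for every k (so p lies in the permutohedron 𝒫^{d−1}_d), yet there do NOT exist d−1 density matrices of size d, all with classical version p, that are pairwise orthogonal. In particular, the (d−1)-distinguishability region 𝒜^{d−1}_d is a proper subset of 𝒫^{d−1}_d for even d > 2. -/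
open scoped Matrix ComplexConjugate ComplexOrder

lemma aux_herm {n : ℕ} {A : Matrix (Fin n) (Fin n) ℂ} (h : A.IsHermitian) (i j : Fin n) :
    A j i = conj (A i j) := by
  have := h.apply j i
  rw [← this]; simp

lemma aux_minor {n : ℕ} {A : Matrix (Fin n) (Fin n) ℂ} (h : A.PosSemidef) (i j : Fin n) :
    Complex.normSq (A i j) ≤ (A i i).re * (A j j).re := by
  have h1 := (h.submatrix ![i, j]).det_nonneg
  rw [Matrix.det_fin_two] at h1
  simp only [Matrix.submatrix_apply, Matrix.cons_val_zero, Matrix.cons_val_one] at h1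
  have h2 := (Complex.le_def.1 h1).1
  have hi : (A i i).im = 0 := by
    have := congrArg Complex.im (aux_herm h.1 i i)
    simp at this; linarith
  rw [aux_herm h.1 i j, Complex.mul_conj] at h2
  simp [hi] at h2
  exact h2

lemma aux_rank {n : ℕ} {A : Matrix (Fin n) (Fin n) ℂ} (h : A.PosSemidef) (ht : A.trace = 1)
    (k : Fin n) (hk : ∀ i, (A * A) i k = A i k) (hr : A k k ≠ 0) (i j : Fin n) :
    A i j = A i k * A k j / A k k := by
  set P : Matrix (Fin n) (Fin n) ℂ := Matrix.of fun i j => A i k * A k j / A k k with hP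
  have hk' : ∀ j, (A * A) k j = A k j := by
    intro j
    have hAA : (A * A).IsHermitian := by
      rw [Matrix.IsHermitian, Matrix.conjTranspose_mul, h.1]
    rw [aux_herm hAA j k, hk, ← aux_herm h.1 j k]
  have h1 : A * P = P := by
    ext a b
    have := hk a
    rw [Matrix.mul_apply] at this
    rw [Matrix.mul_apply]
    simp only [hP, Matrix.of_apply]
    rw [← this, Finset.sum_mul, Finset.sum_div]
    refine Finset.sum_congr rfl fun x _ => by ring
  have h2 : P * A = P := by
    ext a b
    have := hk' b
    rw [Matrix.mul_apply] at this
    rw [Matrix.mul_apply]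
    simp only [hP, Matrix.of_apply]
    rw [← this, Finset.mul_sum, Finset.sum_div]
    refine Finset.sum_congr rfl fun x _ => by ring
  have h3 : P * P = P := by
    ext a b
    have := hk k
    rw [Matrix.mul_apply] at this
    rw [Matrix.mul_apply]
    simp only [hP, Matrix.of_apply]
    have e : ∀ x, A a k * A k x / A k k * (A x k * A k b / A k k)
        = (A k x * A x k) * (A a k * A k b / (A k k * A k k)) := fun x => by ring
    simp_rw [e]
    rw [← Finset.sum_mul, this]
    field_simp
  have h4 : Pᴴ = P := by
    ext a b
    simp only [hP, Matrix.conjTranspose_apply, Matrix.of_apply]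
    simp only [star_div₀, star_mul', Complex.star_def]
    rw [← aux_herm h.1, ← aux_herm h.1, ← aux_herm h.1]
    ring
  have h5 : (A - P).PosSemidef := by
    have := h.conjTranspose_mul_mul_same (1 - P)
    have e : (1 - P)ᴴ * A * (1 - P) = A - P := by
      rw [Matrix.conjTranspose_sub, h4, Matrix.conjTranspose_one]
      simp only [sub_mul, mul_sub, one_mul, mul_one, h1, h2, h3]
      abel
    rwa [e] at this
  have h6 : (A - P).trace = 0 := by
    have := hk k
    rw [Matrix.mul_apply] at this
    rw [Matrix.trace_sub, ht]
    have : P.trace = 1 := by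
      simp only [Matrix.trace, Matrix.diag, hP, Matrix.of_apply]
      rw [← Finset.sum_div, div_eq_one_iff_eq hr, ← this]
      exact Finset.sum_congr rfl fun x _ => by ring
    rw [this]; ring
  have h7 := h5.trace_eq_zero_iff.1 h6
  have := congrFun (congrFun (sub_eq_zero.1 h7) i) j
  rw [this]; simp [hP]

lemma aux_rank_sq {n : ℕ} {A : Matrix (Fin n) (Fin n) ℂ} (h : A.PosSemidef) (ht : A.trace = 1)
    (k : Fin n) (hk : ∀ i, (A * A) i k = A i k) (hr : A k k ≠ 0) : A * A = A := by
  ext a b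
  have := hk k
  rw [Matrix.mul_apply] at this
  rw [Matrix.mul_apply]
  have e : ∀ x, A a x * A x b
        = (A k x * A x k) * (A a k * A k b / (A k k * A k k)) := fun x => by
    rw [aux_rank h ht k hk hr a x, aux_rank h ht k hk hr x b]; ring
  rw [Finset.sum_congr rfl fun x _ => e x, ← Finset.sum_mul, this, aux_rank h ht k hk hr a b]
  field_simp

lemma aux_proj {n : ℕ} {A : Matrix (Fin n) (Fin n) ℂ} (h : A.PosSemidef) (ht : A.trace = 1)
    (hA : A * A = A) (i k : Fin n) (hr : A k k ≠ 0) :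
    (Complex.normSq (A k i) : ℂ) = A i i * A k k := by
  have h1 := aux_rank h ht k (fun i => by rw [hA]) hr i i
  rw [Complex.normSq_eq_conj_mul_self, ← aux_herm h.1, h1]
  field_simp

lemma aux_unit (z w : ℂ) (h : 1 + z + w = 0) (hz : Complex.normSq z = 1)
    (hw : Complex.normSq w = 1) : z.im ^ 2 = 3 / 4 := by
  have : w = -1 - z := by linear_combination h
  subst this
  simp [Complex.normSq_apply] at hz hw
  have : z.re = -1/2 := by nlinarith
  rw [this] at hz
  nlinarith

lemma aux_parity (m : ℕ) (hm : Odd m) (x : Fin m → ℝ) (hx : ∀ n, x n ^ 2 = 3 / 4)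
    (hs : ∑ n, x n = 0) : False := by
  have hc : ∀ n, ∃ s : ℤ, Odd s ∧ x n = s * (√3 / 2) := by
    intro n
    have h3 : (√3 / 2 : ℝ) ^ 2 = 3 / 4 := by
      rw [div_pow, Real.sq_sqrt (by norm_num)]; norm_num
    have := hx n
    rw [← h3, sq_eq_sq_iff_eq_or_eq_neg] at this
    rcases this with h | h
    · exact ⟨1, by decide, by simp [h]⟩
    · exact ⟨-1, by decide, by simp [h]⟩
  choose s hs1 hs2 using hc
  simp_rw [hs2] at hs
  rw [← Finset.sum_mul] at hs
  have h3 : (√3 / 2 : ℝ) ≠ 0 := by positivity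
  have h4 : (∑ n, (s n : ℝ)) = 0 := (mul_eq_zero.1 hs).resolve_right h3
  have h5 : ∑ n, s n = 0 := by exact_mod_cast h4
  choose t ht using hs1
  simp_rw [ht] at h5
  rw [Finset.sum_add_distrib, ← Finset.mul_sum] at h5
  simp at h5
  obtain ⟨c, hc⟩ := hm
  omega

lemma aux_main (e : ℕ) (he : Odd (e + 3)) (ρ : Fin (e + 3) → Matrix (Fin (e + 4)) (Fin (e + 4)) ℂ)
    (q r : ℝ) (hr : ((e : ℝ) + 3) * r = 1) (hq : q = 2 / 3 * r)
    (hpsd : ∀ n, (ρ n).PosSemidef) (htr : ∀ n, (ρ n).trace = 1)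
    (h0 : ∀ n (k : Fin (e + 4)), (k : ℕ) < 3 → ρ n k k = (q : ℂ))
    (h1 : ∀ n (k : Fin (e + 4)), ¬ (k : ℕ) < 3 → ρ n k k = (r : ℂ))
    (hort : ∀ m n, m ≠ n → ρ m * ρ n = 0) : False := by
  have hr0 : r ≠ 0 := by rintro rfl; simp at hr
  have hq0 : q ≠ 0 := by rw [hq]; positivity
  have hrc : ((e : ℂ) + 3) * r = 1 := by exact_mod_cast hr
  set M : Matrix (Fin (e + 4)) (Fin (e + 4)) ℂ := 1 - ∑ n, ρ n with hM
  have hMherm : M.IsHermitian := by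
    rw [Matrix.IsHermitian, hM, Matrix.conjTranspose_sub, Matrix.conjTranspose_sum]
    simp [(hpsd _).1.eq]
  have hρM : ∀ n, ρ n * M = ρ n - ρ n * ρ n := by
    intro n
    rw [hM, mul_sub, mul_one, Finset.mul_sum, Finset.sum_eq_single n]
    · intro b _ hb; exact hort _ _ hb.symm
    · simp
  have hMM : M - M * M = ∑ n, (ρ n - ρ n * ρ n) := by
    rw [Finset.sum_congr rfl fun n _ => (hρM n).symm, ← Finset.sum_mul]
    have : ∑ n, ρ n = 1 - M := by rw [hM]; abel
    clear_value M
    rw [this, sub_mul 1 M M, one_mul]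
  have hMapp : ∀ i j, M i j = (1 : Matrix (Fin (e + 4)) (Fin (e + 4)) ℂ) i j - ∑ n, ρ n i j := by
    intro i j
    rw [hM, Matrix.sub_apply, Matrix.sum_apply]
  have hM0 : ∀ k : Fin (e + 4), (k : ℕ) < 3 → M k k = 1 / 3 := by
    intro k hk
    rw [hMapp]
    simp only [h0 _ k hk, Matrix.one_apply_eq, Finset.sum_const, Finset.card_univ, Fintype.card_fin,
      nsmul_eq_mul]
    rw [hq]; push_cast
    linear_combination (-2 / 3) * hrc
  have hM1 : ∀ k : Fin (e + 4), ¬ (k : ℕ) < 3 → M k k = 0 := by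
    intro k hk
    rw [hMapp]
    simp only [h1 _ k hk, Matrix.one_apply_eq, Finset.sum_const, Finset.card_univ, Fintype.card_fin,
      nsmul_eq_mul]
    push_cast
    linear_combination - hrc
  -- diagonal of squares
  have hsq : ∀ (A : Matrix (Fin (e + 4)) (Fin (e + 4)) ℂ), A.IsHermitian → ∀ k,
      ((A * A) k k).re = ∑ j, Complex.normSq (A k j) := by
    intro A hA k
    rw [Matrix.mul_apply, Complex.re_sum]
    refine Finset.sum_congr rfl fun j _ => ?_
    rw [aux_herm hA k j, Complex.mul_conj, Complex.ofReal_re]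
  have hN : ∀ n k, 0 ≤ ((ρ n - ρ n * ρ n) k k).re := by
    intro n k
    rw [Matrix.sub_apply, Complex.sub_re, hsq _ (hpsd n).1, sub_nonneg]
    calc _ ≤ ∑ j, (ρ n k k).re * (ρ n j j).re :=
          Finset.sum_le_sum fun j _ => aux_minor (hpsd n) k j
      _ = (ρ n k k).re * ((ρ n).trace).re := by
          rw [← Finset.mul_sum, Matrix.trace, Complex.re_sum]; rfl
      _ = _ := by rw [htr]; simp
  have hMrow : ∀ k : Fin (e + 4), ¬ (k : ℕ) < 3 → ∀ j, M k j = 0 := by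
    intro k hk
    have h := congrArg (fun A => (A k k).re) hMM
    simp only [Matrix.sub_apply, Matrix.sum_apply, Complex.re_sum, Complex.sub_re] at h
    rw [hM1 k hk, hsq M hMherm] at h
    have h' : 0 ≤ ∑ n, ((ρ n k k).re - ((ρ n * ρ n) k k).re) :=
      Finset.sum_nonneg fun n _ => by simpa using hN n k
    rw [← h] at h'
    simp only [Complex.zero_re, zero_sub, Left.nonneg_neg_iff] at h'
    have h'' := le_antisymm h' (Finset.sum_nonneg fun j _ => Complex.normSq_nonneg _)
    rw [Finset.sum_eq_zero_iff_of_nonneg (fun j _ => Complex.normSq_nonneg _)] at h''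
    intro j
    exact Complex.normSq_eq_zero.1 (h'' j (Finset.mem_univ _))
  have hMcol : ∀ k : Fin (e + 4), ¬ (k : ℕ) < 3 → ∀ j, M j k = 0 := by
    intro k hk j
    rw [aux_herm hMherm k j, hMrow k hk, map_zero]
  -- each state is a projection
  have hproj : ∀ n, ρ n * ρ n = ρ n := by
    intro n
    have h3 : ¬ (((Fin.last (e + 3)) : Fin (e + 4)) : ℕ) < 3 := by simp
    refine aux_rank_sq (hpsd n) (htr n) (Fin.last (e + 3)) (fun i => ?_) ?_
    · have h := congrFun (congrFun (hρM n) i) (Fin.last (e + 3))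
      rw [Matrix.mul_apply, Finset.sum_eq_zero, Matrix.sub_apply] at h
      · linear_combination h
      · intro x _; rw [hMcol _ h3, mul_zero]
    · rw [h1 n _ h3]; exact_mod_cast hr0
  have hρM0 : ∀ n, ρ n * M = 0 := by intro n; rw [hρM, hproj, sub_self]
  have hMproj : M * M = M := by
    have : M - M * M = 0 := by rw [hMM]; simp [hproj]
    exact (sub_eq_zero.1 this).symm
  have hMpsd : M.PosSemidef := by
    have := Matrix.posSemidef_conjTranspose_mul_self M
    rwa [hMherm.eq, hMproj] at this
  have hMtr : M.trace = 1 := by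
    rw [hM, Matrix.trace_sub, Matrix.trace_sum]
    simp [htr]
    ring
  have l0 : ((0 : Fin (e + 4)) : ℕ) < 3 := by simp
  have v1 : ((1 : Fin (e + 4)) : ℕ) = 1 := rfl
  have v2 : ((2 : Fin (e + 4)) : ℕ) = 2 := rfl
  have l1 : ((1 : Fin (e + 4)) : ℕ) < 3 := by rw [v1]; norm_num
  have l2 : ((2 : Fin (e + 4)) : ℕ) < 3 := by rw [v2]; norm_num
  have hMn : ∀ k : Fin (e + 4), (k : ℕ) < 3 → Complex.normSq (M 0 k) = 1 / 9 := by
    intro k hk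
    have := aux_proj hMpsd hMtr hMproj k 0 (by rw [hM0 0 l0]; norm_num)
    rw [hM0 _ hk, hM0 _ l0] at this
    have h9 : (Complex.normSq (M 0 k) : ℂ) = ((1 / 9 : ℝ) : ℂ) := by rw [this]; norm_num
    exact_mod_cast h9
  have hρn : ∀ n, ∀ k : Fin (e + 4), (k : ℕ) < 3 → Complex.normSq (ρ n k 0) = q ^ 2 := by
    intro n k hk
    have := aux_proj (hpsd n) (htr n) (hproj n) 0 k (by rw [h0 n k hk]; exact_mod_cast hq0)
    rw [h0 n _ hk, h0 n _ l0] at this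
    have h9 : (Complex.normSq (ρ n k 0) : ℂ) = ((q ^ 2 : ℝ) : ℂ) := by rw [this]; push_cast; ring
    exact_mod_cast h9
  have hMρ0 : ∀ n, M * ρ n = 0 := by
    intro n
    have := congrArg Matrix.conjTranspose (hρM0 n)
    rwa [Matrix.conjTranspose_mul, hMherm.eq, (hpsd n).1.eq, Matrix.conjTranspose_zero] at this
  have hrow : ∀ n, M 0 0 * ρ n 0 0 + M 0 1 * ρ n 1 0 + M 0 2 * ρ n 2 0 = 0 := by
    intro n
    have h := congrFun (congrFun (hMρ0 n) 0) 0
    rw [Matrix.mul_apply, Fin.sum_univ_succ, Fin.sum_univ_succ, Fin.sum_univ_succ,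
      Finset.sum_eq_zero] at h
    · simp only [Matrix.zero_apply, add_zero] at h
      rw [← h, ← add_assoc]
      rfl
    · intro x _
      rw [hMcol _ (by simp), zero_mul]
  have hqc : (q : ℂ) ≠ 0 := by exact_mod_cast hq0
  refine aux_parity (e + 3) he (fun n => (3 / (q : ℂ) * (M 0 1 * ρ n 1 0)).im) (fun n => ?_) ?_
  · have nz : ∀ k : Fin (e + 4), (k : ℕ) < 3 →
        Complex.normSq (3 / (q : ℂ) * (M 0 k * ρ n k 0)) = 1 := by
      intro k hk
      rw [map_mul, map_mul, map_div₀, hMn k hk, hρn n k hk, Complex.normSq_ofReal]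
      have : Complex.normSq 3 = 9 := by
        rw [Complex.normSq_ofNat]; norm_num
      rw [this]; field_simp
    refine aux_unit _ (3 / (q : ℂ) * (M 0 2 * ρ n 2 0)) ?_ (nz 1 l1) (nz 2 l2)
    have h := hrow n
    rw [hM0 0 l0, h0 n 0 l0] at h
    field_simp
    linear_combination 3 * h
  · rw [← Complex.im_sum, ← Finset.mul_sum, ← Finset.mul_sum]
    have h10 : ∑ n, ρ n 1 0 = - M 1 0 := by
      rw [hMapp, Matrix.one_apply_ne]
      · ring
      · intro h
        have := congrArg Fin.val h
        rw [v1] at this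
        simp at this
    rw [h10, aux_herm hMherm 0 1, mul_neg, Complex.mul_conj]
    have : 3 / (q : ℂ) * -(Complex.normSq (M 0 1) : ℂ)
        = ((3 / q * - Complex.normSq (M 0 1) : ℝ) : ℂ) := by push_cast; ring
    rw [this, Complex.ofReal_im]

theorem stmt_6 (d : ℕ) (hd : 2 < d) (heven : Even d)
    (p : Fin d → ℝ)
    (hp : ∀ k : Fin d, p k = if (k : ℕ) < 3 then 2 / (3 * ((d : ℝ) - 1)) else 1 / ((d : ℝ) - 1)) :
    (∀ k : Fin d, p k ≤ 1 / ((d : ℝ) - 1)) ∧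
    ¬ ∃ ρ : Fin (d - 1) → Matrix (Fin d) (Fin d) ℂ,
      (∀ n, (ρ n).PosSemidef) ∧ (∀ n, (ρ n).trace = 1) ∧
      (∀ (n : Fin (d - 1)) (k : Fin d), ρ n k k = (p k : ℂ)) ∧
      (∀ m n : Fin (d - 1), m ≠ n → ρ m * ρ n = 0) := by
  have hd' : (2 : ℝ) < d := by exact_mod_cast hd
  have hpos : (0 : ℝ) < (d : ℝ) - 1 := by linarith
  refine ⟨fun k => ?_, ?_⟩
  · rw [hp]
    split_ifs
    · rw [div_le_div_iff₀ (by positivity) hpos]; linarith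
    · exact le_rfl
  · rintro ⟨ρ, h1, h2, h3, h4⟩
    obtain ⟨e, rfl⟩ : ∃ e, d = e + 4 := ⟨d - 4, by obtain ⟨c, rfl⟩ := heven; omega⟩
    have hc : (((e + 4 : ℕ) : ℝ) - 1) = (e : ℝ) + 3 := by push_cast; ring
    rw [hc] at hp hpos
    refine aux_main e ?_ ρ (2 / (3 * ((e : ℝ) + 3))) (1 / ((e : ℝ) + 3)) ?_ ?_ h1 h2 ?_ ?_ h4
    · obtain ⟨c, hc⟩ := heven
      exact ⟨c - 1, by omega⟩
    · field_simp
    · field_simp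
    · intro n k hk
      rw [h3, hp, if_pos hk]
    · intro n k hk
      rw [h3, hp, if_neg hk]
end

section
/- Let p be a probability vector of dimension d, let g : Fin d → Fin d' be any function, and define the coarse-grained probability vector q of dimension d' by q j = ∑_{k : g k = j} p k. If there exist M orthonormal vectors φ⁽¹⁾, …, φ⁽ᴹ⁾ in ℂ^{d'} with |φ⁽ⁿ⁾ⱼ|² = q j for all j and n, then there exist M orthonormal vectors ψ⁽¹⁾, …, ψ⁽ᴹ⁾ in ℂᵈ with |ψ⁽ⁿ⁾ₖ|² = p k for all k and n. -/
open scoped ComplexConjugate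

theorem stmt_7 (d d' M : ℕ)
    (p : Fin d → ℝ) (hp0 : ∀ k, 0 ≤ p k) (hp1 : ∑ k, p k = 1)
    (g : Fin d → Fin d')
    (q : Fin d' → ℝ)
    (hq : ∀ j : Fin d', q j = ∑ k ∈ Finset.univ.filter (fun k => g k = j), p k)
    (φ : Fin M → Fin d' → ℂ)
    (hφorth : ∀ m n : Fin M, ∑ j, conj (φ m j) * φ n j = if m = n then 1 else 0)
    (hφmod : ∀ (n : Fin M) (j : Fin d'), ‖φ n j‖ ^ 2 = q j) :
    ∃ ψ : Fin M → Fin d → ℂ,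
      (∀ m n : Fin M, ∑ k, conj (ψ m k) * ψ n k = if m = n then 1 else 0) ∧
      (∀ (n : Fin M) (k : Fin d), ‖ψ n k‖ ^ 2 = p k) := by
  refine ⟨fun n k => (Real.sqrt (p k / q (g k)) : ℂ) * φ n (g k), ?_, ?_⟩
  · intro m n
    have hq0 : ∀ j, 0 ≤ q j := fun j => by
      rw [hq]; exact Finset.sum_nonneg fun k _ => hp0 k
    rw [← hφorth m n, ← Finset.sum_fiberwise Finset.univ g]
    refine Finset.sum_congr rfl fun j _ => ?_
    have h1 : ∀ k ∈ Finset.univ.filter (fun k => g k = j),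
        conj ((Real.sqrt (p k / q (g k)) : ℂ) * φ m (g k)) *
          ((Real.sqrt (p k / q (g k)) : ℂ) * φ n (g k))
        = ((p k : ℝ) : ℂ) * ((((q j)⁻¹ : ℝ) : ℂ) * (conj (φ m j) * φ n j)) := by
      intro k hk
      have hk' : g k = j := by simpa using hk
      rw [hk']
      have h2 : (Real.sqrt (p k / q j) : ℂ) * (Real.sqrt (p k / q j) : ℂ)
          = ((p k : ℝ) : ℂ) * (((q j)⁻¹ : ℝ) : ℂ) := by
        rw [← Complex.ofReal_mul, ← Complex.ofReal_mul,
          Real.mul_self_sqrt (div_nonneg (hp0 k) (hq0 j)), div_eq_mul_inv]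
      rw [map_mul, Complex.conj_ofReal, ← mul_assoc ((p k : ℝ) : ℂ), ← h2]
      ring
    rw [Finset.sum_congr rfl h1, ← Finset.sum_mul, ← Complex.ofReal_sum, ← hq j]
    by_cases h0 : q j = 0
    · have h3 : φ n j = 0 := by
        have := hφmod n j
        rw [h0] at this
        simpa using this
      simp [h3]
    · rw [← mul_assoc, ← Complex.ofReal_mul, mul_inv_cancel₀ h0]
      simp
  · intro n k
    have hle : p k ≤ q (g k) := by
      rw [hq]
      exact Finset.single_le_sum (f := p) (fun i _ => hp0 i) (by simp)
    have hq0 : 0 ≤ q (g k) := (hp0 k).trans hle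
    rw [norm_mul, mul_pow, hφmod, Complex.norm_real, Real.norm_eq_abs, sq_abs,
      Real.sq_sqrt (div_nonneg (hp0 k) hq0)]
    by_cases h0 : q (g k) = 0
    · rw [h0, mul_zero]
      exact le_antisymm (hp0 k) (h0 ▸ hle)
    · exact div_mul_cancel₀ _ h0
end

section
/- Let d be a prime number. Then there exists ε > 0 such that for every probability vector p of dimension d with total variation distance (1/2)·∑ₖ |p k − 1/d| ≤ ε from the uniform distribution, there exist d−1 orthonormal vectors ψ⁽¹⁾, …, ψ⁽ᵈ⁻¹⁾ in ℂᵈ with |ψ⁽ⁿ⁾ₖ|² = p k for all k and n. (Equivalently, for prime d a total-variation ball around the uniform distribution is contained in the distinguishability region 𝒜^{d−1}_d.) -/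
open scoped ComplexConjugate

open ZMod in
lemma aux_complex (d : ℕ) [Fact d.Prime] (c : ZMod d → ZMod d → ℂ) :
    ∃ η : ZMod d → ZMod d → ℂ, ∀ n m, n ≠ 0 → n ≠ m →
      ∑ k, stdAddChar (-(k * (n - m))) * (η n k - η m k) = c n m := by
  classical
  let A : ZMod d → ZMod d → ℂ := fun n j =>
    ∑ s ∈ Finset.range (n / j).val, c (((s : ZMod d) + 1) * j) ((s : ZMod d) * j)
  refine ⟨fun n => dft.symm (A n), fun n m hn hnm => ?_⟩
  have key : dft (dft.symm (A n) - dft.symm (A m)) (n - m) = A n (n - m) - A m (n - m) := by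
    simp
  rw [dft_apply] at key
  simp only [smul_eq_mul, Pi.sub_apply] at key
  rw [key]
  have hj : n - m ≠ 0 := sub_ne_zero.mpr hnm
  set j := n - m with hjdef
  have hm : m / j = n / j - 1 := by
    have : m = n - j := by rw [hjdef]; ring
    rw [this, sub_div, div_self hj]
  have ht : n / j ≠ 0 := div_ne_zero hn hj
  have hv : (n / j).val = (m / j).val + 1 := by
    have h1 : n / j = m / j + 1 := by rw [hm]; ring
    have hd1 : 1 < d := (Fact.out : d.Prime).one_lt
    have : Fact (1 < d) := ⟨hd1⟩
    rw [h1] at ht ⊢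
    rw [ZMod.val_add, ZMod.val_one, Nat.mod_eq_of_lt]
    by_contra hcon
    apply ht
    have hlt := ZMod.val_lt (m / j)
    have he : (m / j).val + 1 = d := by omega
    have : (((m / j).val + 1 : ℕ) : ZMod d) = 0 := by rw [he]; simp
    simpa using this
  simp only [A]
  rw [hv, Finset.sum_range_succ, add_sub_cancel_left]
  have hc : (((m / j).val : ℕ) : ZMod d) = m / j := ZMod.natCast_zmod_val _
  rw [hc, add_mul, div_mul_cancel₀ _ hj, one_mul, hjdef]
  congr 1
  ring

open ZMod in
lemma conj_char (d : ℕ) [NeZero d] (x : ZMod d) :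
    conj (stdAddChar x : ℂ) = stdAddChar (-x) := by
  rw [AddChar.map_neg_eq_conj]

open ZMod in
lemma aux_real (d : ℕ) [Fact d.Prime] (c : ZMod d → ZMod d → ℂ)
    (hc : ∀ n m, c m n = - conj (c n m)) :
    ∃ η : ZMod d → ZMod d → ℝ, ∀ n m, n ≠ 0 → m ≠ 0 → n ≠ m →
      ∑ k, stdAddChar (-(k * (n - m))) * ((η n k : ℂ) - η m k) = c n m := by
  obtain ⟨η, h⟩ := aux_complex d c
  refine ⟨fun n k => (η n k).re, fun n m hn hm hnm => ?_⟩
  have h1 := h n m hn hnm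
  have h2 := congrArg conj (h m n hm hnm.symm)
  rw [map_sum, hc n m] at h2
  simp only [map_mul, map_sub, conj_char, map_neg, Complex.conj_conj] at h2
  have h3 : ∑ k, (stdAddChar (-(k * (n - m))) : ℂ) * (conj (η n k) - conj (η m k)) = c n m := by
    rw [← neg_inj, ← h2, ← Finset.sum_neg_distrib]
    refine Finset.sum_congr rfl fun k _ => ?_
    have : -(k * (n - m)) = - -(k * (m - n)) := by ring
    rw [this]; ring
  have h4 : ∀ z : ℂ, (z.re : ℂ) = (z + conj z) / 2 := fun z => by
    rw [Complex.add_conj]; push_cast; ring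
  calc _ = (∑ k, (stdAddChar (-(k * (n - m))) : ℂ) * (η n k - η m k)
        + ∑ k, (stdAddChar (-(k * (n - m))) : ℂ) * (conj (η n k) - conj (η m k))) / 2 := by
        rw [← Finset.sum_add_distrib, Finset.sum_div]
        refine Finset.sum_congr rfl fun k _ => ?_
        rw [h4, h4]; ring
    _ = _ := by rw [h1, h3]; ring

/-- Index pairs. -/
abbrev PairIdx (d : ℕ) : Type :=
  {x : ZMod d × ZMod d // x.1 ≠ 0 ∧ x.2 ≠ 0 ∧ x.1.val < x.2.val}

open ZMod in
lemma aux_pairs (d : ℕ) [Fact d.Prime] (c : PairIdx d → ℂ) :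
    ∃ η : ZMod d → ZMod d → ℝ, ∀ x : PairIdx d,
      ∑ k, stdAddChar (-(k * (x.1.1 - x.1.2))) * ((η x.1.1 k : ℂ) - η x.1.2 k) = c x := by
  classical
  let c0 : ZMod d → ZMod d → ℂ := fun n m =>
    if h : n ≠ 0 ∧ m ≠ 0 ∧ n.val < m.val then c ⟨(n, m), h⟩ else 0
  obtain ⟨η, h⟩ := aux_real d (fun n m => c0 n m - conj (c0 m n)) (fun n m => by simp)
  refine ⟨η, fun x => ?_⟩
  obtain ⟨⟨n, m⟩, hn, hm, hlt⟩ := x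
  have := h n m hn hm (fun e => by simp [e] at hlt)
  simp only at this hlt hn hm ⊢
  rw [this]
  have h2 : ¬ (m ≠ 0 ∧ n ≠ 0 ∧ m.val < n.val) := fun h => by have := h.2.2; omega
  simp only [c0]
  rw [dif_neg h2, dif_pos ⟨hn, hm, hlt⟩]
  simp

open ZMod in
/-- The overlap map. -/
noncomputable def overlapMap (d : ℕ) [NeZero d]
    (y : (ZMod d → ℝ) × (ZMod d → ZMod d → ℝ)) : (ZMod d → ℝ) × (PairIdx d → ℂ) :=
  (y.1, fun x => ∑ k, (y.1 k : ℂ) * (stdAddChar (-(k * (x.1.1 - x.1.2))) *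
    Complex.exp (Complex.I * ((y.2 x.1.1 k : ℂ) - y.2 x.1.2 k))))

open ZMod in
lemma overlap_zero (d : ℕ) [Fact d.Prime] :
    overlapMap d (fun _ => 1 / (d : ℝ), 0) = (fun _ => 1 / (d : ℝ), 0) := by
  unfold overlapMap
  ext x
  · rfl
  · obtain ⟨⟨n, m⟩, hn, hm, hlt⟩ := x
    have hne : n ≠ m := fun e => by simp [e] at hlt
    have := AddChar.sum_mulShift (R := ZMod d) (R' := ℂ) (ψ := stdAddChar) (-(n - m))
      (isPrimitive_stdAddChar d)
    rw [if_neg (neg_ne_zero.mpr (sub_ne_zero.mpr hne))] at this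
    simp only [mul_neg] at this
    simp [← Finset.mul_sum]
    right
    simpa using this

lemma overlap_contDiff (d : ℕ) [NeZero d] : ContDiff ℝ 1 (overlapMap d) := by
  unfold overlapMap
  have hr : ContDiff ℝ 1 (fun x : ℝ => (x : ℂ)) := Complex.ofRealCLM.contDiff
  refine contDiff_fst.prodMk (contDiff_pi.mpr fun x => ContDiff.sum fun k _ => ?_)
  have h1 : ContDiff ℝ 1 fun y : (ZMod d → ℝ) × (ZMod d → ZMod d → ℝ) => (y.1 k : ℂ) :=
    hr.comp (by fun_prop)
  have h2 : ∀ n, ContDiff ℝ 1 fun y : (ZMod d → ℝ) × (ZMod d → ZMod d → ℝ) => (y.2 n k : ℂ) :=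
    fun n => hr.comp (by fun_prop)
  exact h1.mul (contDiff_const.mul (contDiff_const.mul ((h2 _).sub (h2 _))).cexp)

open ZMod in
lemma overlap_surj (d : ℕ) [Fact d.Prime] :
    (fderiv ℝ (overlapMap d) (fun _ => 1 / (d : ℝ), 0)).range = ⊤ := by
  rw [LinearMap.range_eq_top]
  rintro ⟨q, c⟩
  have hd0 : (d : ℂ) ≠ 0 := by exact_mod_cast (Fact.out : d.Prime).ne_zero
  obtain ⟨η, hη⟩ := aux_pairs d (fun x => (c x -
    ∑ k, (q k : ℂ) * stdAddChar (-(k * (x.1.1 - x.1.2)))) * d / Complex.I)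
  refine ⟨(q, η), ?_⟩
  have hF := ((overlap_contDiff d).differentiable one_ne_zero
    (fun _ => 1 / (d : ℝ), 0)).hasFDerivAt
  have hl := hF.hasLineDerivAt (q, η)
  refine HasDerivAt.unique hl ?_
  refine HasDerivAt.prodMk ?_ ?_
  · rw [hasDerivAt_pi]
    intro k
    simpa using ((hasDerivAt_id (0 : ℝ)).mul_const (q k)).const_add (1 / (d : ℝ))
  · rw [hasDerivAt_pi]
    intro x
    have hx := hη x
    have hsum : c x = ∑ k, ((q k : ℂ) * stdAddChar (-(k * (x.1.1 - x.1.2))) +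
        (1 / (d : ℂ)) * (stdAddChar (-(k * (x.1.1 - x.1.2))) *
          (Complex.I * ((η x.1.1 k : ℂ) - η x.1.2 k)))) := by
      have e : ∀ k, (1 / (d : ℂ)) * (stdAddChar (-(k * (x.1.1 - x.1.2))) *
          (Complex.I * ((η x.1.1 k : ℂ) - η x.1.2 k))) = (Complex.I / d) *
          (stdAddChar (-(k * (x.1.1 - x.1.2))) * ((η x.1.1 k : ℂ) - η x.1.2 k)) := by
        intro k; ring
      simp only [e]
      rw [Finset.sum_add_distrib, ← Finset.mul_sum, hx]
      generalize (∑ k, (q k : ℂ) * stdAddChar (-(k * (x.1.1 - x.1.2)))) = S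
      have hI := Complex.I_ne_zero
      field_simp
      ring
    rw [hsum]
    refine HasDerivAt.fun_sum fun k _ => ?_
    have hid : HasDerivAt (fun t : ℝ => (t : ℂ)) 1 0 := Complex.ofRealCLM.hasDerivAt
    have h1 : HasDerivAt (fun t : ℝ => 1 / (d : ℂ) + t * q k) (q k : ℂ) 0 := by
      simpa using (hid.mul_const (q k : ℂ)).const_add (1 / (d : ℂ))
    have h2 : HasDerivAt (fun t : ℝ => Complex.I * ((t : ℂ) * η x.1.1 k - t * η x.1.2 k))
        (Complex.I * ((η x.1.1 k : ℂ) - η x.1.2 k)) 0 := by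
      simpa using ((hid.mul_const (η x.1.1 k : ℂ)).sub
        (hid.mul_const (η x.1.2 k : ℂ))).const_mul Complex.I
    have h3 := h1.mul ((h2.cexp).const_mul (stdAddChar (-(k * (x.1.1 - x.1.2))) : ℂ))
    refine (h3.congr_deriv (by simp)).congr_of_eventuallyEq (Filter.Eventually.of_forall ?_)
    intro t
    simp

open ZMod in
lemma aux_local (d : ℕ) [Fact d.Prime] :
    ∃ ε > (0 : ℝ), ∀ p : ZMod d → ℝ, (∀ k, |p k - 1 / (d : ℝ)| < ε) →
      ∃ θ : ZMod d → ZMod d → ℝ, ∀ x : PairIdx d,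
        ∑ k, (p k : ℂ) * (stdAddChar (-(k * (x.1.1 - x.1.2))) *
          Complex.exp (Complex.I * ((θ x.1.1 k : ℂ) - θ x.1.2 k))) = 0 := by
  have hs := ((overlap_contDiff d).contDiffAt (x := (fun _ => 1 / (d : ℝ), 0))).hasStrictFDerivAt
    one_ne_zero
  have hmap := hs.map_nhds_eq_of_surj (overlap_surj d)
  rw [overlap_zero] at hmap
  have hr : Set.range (overlapMap d) ∈
      nhds ((fun _ => 1 / (d : ℝ), 0) : (ZMod d → ℝ) × (PairIdx d → ℂ)) := by
    rw [← hmap]; exact Filter.range_mem_map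
  obtain ⟨ε, hε, hb⟩ := Metric.mem_nhds_iff.mp hr
  refine ⟨ε, hε, fun p hp => ?_⟩
  have hmem : ((p, 0) : (ZMod d → ℝ) × (PairIdx d → ℂ)) ∈
      Metric.ball ((fun _ => 1 / (d : ℝ), 0) : (ZMod d → ℝ) × (PairIdx d → ℂ)) ε := by
    rw [Metric.mem_ball, Prod.dist_eq, dist_self, max_lt_iff]
    refine ⟨(dist_pi_lt_iff hε).mpr fun k => ?_, hε⟩
    rw [Real.dist_eq]; exact hp k
  obtain ⟨⟨p', θ⟩, h⟩ := hb hmem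
  have h1 : p' = p := congrArg Prod.fst h
  subst h1
  refine ⟨θ, fun x => ?_⟩
  have h2 := congrFun (congrArg Prod.snd h) x
  exact h2

open ZMod in
lemma aux_zmod (d : ℕ) [Fact d.Prime] :
    ∃ ε > (0 : ℝ), ∀ p : ZMod d → ℝ, (∀ k, 0 ≤ p k) → ∑ k, p k = 1 →
      (∀ k, |p k - 1 / (d : ℝ)| < ε) →
      ∃ ψ : ZMod d → ZMod d → ℂ,
        (∀ m n, m ≠ 0 → n ≠ 0 → ∑ k, conj (ψ m k) * ψ n k = if m = n then 1 else 0) ∧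
        (∀ n k, ‖ψ n k‖ ^ 2 = p k) := by
  obtain ⟨ε, hε, H⟩ := aux_local d
  refine ⟨ε, hε, fun p hp hsum hclose => ?_⟩
  obtain ⟨θ, hθ⟩ := H p hclose
  let ψ : ZMod d → ZMod d → ℂ := fun n k =>
    (Real.sqrt (p k) : ℂ) * (stdAddChar (-(k * n)) * Complex.exp (Complex.I * θ n k))
  have hprod : ∀ m n k, conj (ψ m k) * ψ n k = (p k : ℂ) * (stdAddChar (-(k * (n - m))) *
      Complex.exp (Complex.I * ((θ n k : ℂ) - θ m k))) := by
    intro m n k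
    have hsq : (Real.sqrt (p k) : ℂ) * (Real.sqrt (p k) : ℂ) = p k := by
      rw [← Complex.ofReal_mul, Real.mul_self_sqrt (hp k)]
    have e1 : -(k * (n - m)) = - -(k * m) + -(k * n) := by ring
    have e2 : Complex.I * ((θ n k : ℂ) - θ m k) = -Complex.I * θ m k + Complex.I * θ n k := by ring
    simp only [ψ, map_mul, Complex.conj_ofReal, conj_char, ← Complex.exp_conj, Complex.conj_I]
    rw [e1, e2, AddChar.map_add_eq_mul, Complex.exp_add, ← hsq]
    ring
  have horth : ∀ m n, m ≠ 0 → n ≠ 0 → n.val < m.val → ∑ k, conj (ψ m k) * ψ n k = 0 := by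
    intro m n hm hn hlt
    simp only [hprod]
    exact hθ ⟨(n, m), hn, hm, hlt⟩
  refine ⟨ψ, fun m n hm hn => ?_, fun n k => ?_⟩
  · split_ifs with h
    · subst h
      simp only [hprod]
      simp only [sub_self, mul_zero, neg_zero, AddChar.map_zero_eq_one, Complex.exp_zero, mul_one]
      exact_mod_cast hsum
    · rcases lt_trichotomy n.val m.val with hl | hl | hl
      · exact horth m n hm hn hl
      · exact absurd (ZMod.val_injective d hl).symm h
      · have := congrArg conj (horth n m hn hm hl)
        rw [map_sum, map_zero] at this
        rw [← this]
        refine Finset.sum_congr rfl fun k _ => ?_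
        simp [mul_comm]
  · have h := hprod n n k
    simp only [sub_self, mul_zero, neg_zero, AddChar.map_zero_eq_one, Complex.exp_zero,
      mul_one] at h
    rw [Complex.conj_mul'] at h
    exact_mod_cast h

theorem stmt_8 (d : ℕ) (hd : d.Prime) :
    ∃ ε > (0 : ℝ), ∀ p : Fin d → ℝ,
      (∀ k, 0 ≤ p k) → (∑ k, p k = 1) →
      (1 / 2) * ∑ k, |p k - 1 / (d : ℝ)| ≤ ε →
      ∃ ψ : Fin (d - 1) → Fin d → ℂ,
        (∀ m n : Fin (d - 1), ∑ k, conj (ψ m k) * ψ n k = if m = n then 1 else 0) ∧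
        (∀ (n : Fin (d - 1)) (k : Fin d), ‖ψ n k‖ ^ 2 = p k) := by
  have : Fact d.Prime := ⟨hd⟩
  obtain ⟨ε, hε, H⟩ := aux_zmod d
  have e : Fin d ≃ ZMod d := (ZMod.finEquiv d).toEquiv
  refine ⟨ε / 4, by positivity, fun p hp hsum hclose => ?_⟩
  obtain ⟨ψ, h1, h2⟩ := H (fun k => p (e.symm k)) (fun k => hp _)
    (by rw [← hsum]; exact Equiv.sum_comp e.symm p) (fun k => by
      have := Finset.single_le_sum (f := fun k => |p k - 1 / (d : ℝ)|)
        (fun i _ => abs_nonneg _) (Finset.mem_univ (e.symm k))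
      linarith)
  let f : Fin (d - 1) → ZMod d := fun a => ((a.val + 1 : ℕ) : ZMod d)
  have hval : ∀ a, (f a).val = a.val + 1 := fun a => ZMod.val_natCast_of_lt (by omega)
  have hf0 : ∀ a, f a ≠ 0 := fun a h => by
    have := hval a
    rw [h, ZMod.val_zero] at this
    omega
  have hinj : ∀ a b, f a = f b ↔ a = b := fun a b => by
    refine ⟨fun h => ?_, fun h => by rw [h]⟩
    have h3 := hval a
    rw [h, hval b] at h3
    ext; omega
  refine ⟨fun a k => ψ (f a) (e k), fun m n => ?_, fun n k => ?_⟩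
  · have := h1 (f m) (f n) (hf0 m) (hf0 n)
    simp only [hinj] at this
    rw [← this]
    exact Equiv.sum_comp e (fun k => conj (ψ (f m) k) * ψ (f n) k)
  · simpa using h2 (f n) (e k)
end

section
/- Let X⁽¹⁾, …, X⁽ᴹ⁾ be d×d correlation matrices and let Ψ be a d×d complex matrix with Frobenius norm 1 (encoding a bipartite pure state with coefficients Ψ_{k,k'}). For each n define the (d·d)×(d·d) matrix ρ⁽ⁿ⁾, indexed by pairs, with entries ρ⁽ⁿ⁾_{(k,k'),(l,l')} = X⁽ⁿ⁾_{k,l} · Ψ_{k,k'} · conj(Ψ_{l,l'}). If ρ⁽ᵐ⁾ · ρ⁽ⁿ⁾ = 0 for all m ≠ n, then there exists a unit vector ψ ∈ ℂᵈ such that the d×d matrices σ⁽ⁿ⁾ with entries σ⁽ⁿ⁾_{k,l} = X⁽ⁿ⁾_{k,l} · ψ_k · conj(ψ_l) satisfy σ⁽ᵐ⁾ · σ⁽ⁿ⁾ = 0 for all m ≠ n. (Entanglement does not help to distinguish Schur-product channels.) -/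
open scoped Matrix ComplexConjugate ComplexOrder

theorem stmt_11 (d M : ℕ)
    (X : Fin M → Matrix (Fin d) (Fin d) ℂ)
    (hXpsd : ∀ n, (X n).PosSemidef)
    (hXdiag : ∀ (n : Fin M) (k : Fin d), X n k k = 1)
    (Ψ : Matrix (Fin d) (Fin d) ℂ)
    (hΨ : ∑ k, ∑ k', ‖Ψ k k'‖ ^ 2 = 1)
    (horth : ∀ m n : Fin M, m ≠ n →
      (Matrix.of fun pq rs : Fin d × Fin d =>
        X m pq.1 rs.1 * Ψ pq.1 pq.2 * conj (Ψ rs.1 rs.2)) *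
      (Matrix.of fun pq rs : Fin d × Fin d =>
        X n pq.1 rs.1 * Ψ pq.1 pq.2 * conj (Ψ rs.1 rs.2)) = 0) :
    ∃ ψ : Fin d → ℂ,
      (∑ k, ‖ψ k‖ ^ 2 = 1) ∧
      (∀ m n : Fin M, m ≠ n →
        (Matrix.of fun k l : Fin d => X m k l * ψ k * conj (ψ l)) *
        (Matrix.of fun k l : Fin d => X n k l * ψ k * conj (ψ l)) = 0) := by
  have hp : ∀ l, 0 ≤ ∑ l', ‖Ψ l l'‖ ^ 2 := fun l =>
    Finset.sum_nonneg fun _ _ => sq_nonneg _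
  refine ⟨fun k => ((Real.sqrt (∑ k', ‖Ψ k k'‖ ^ 2) : ℝ) : ℂ), ?_, ?_⟩
  · rw [← hΨ]
    refine Finset.sum_congr rfl fun k _ => ?_
    rw [Complex.norm_real, Real.norm_eq_abs, sq_abs, Real.sq_sqrt (hp k)]
  · intro m n hmn
    ext k j
    have hex : ∀ k, Real.sqrt (∑ k', ‖Ψ k k'‖ ^ 2) ≠ 0 → ∃ k', Ψ k k' ≠ 0 := by
      intro k hk
      by_contra! h
      exact hk (by simp [h])
    have key : (Matrix.of (fun k l : Fin d => X m k l *
          ((Real.sqrt (∑ k', ‖Ψ k k'‖ ^ 2) : ℝ) : ℂ) *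
          conj ((Real.sqrt (∑ k', ‖Ψ l k'‖ ^ 2) : ℝ) : ℂ)) *
        Matrix.of (fun k l : Fin d => X n k l *
          ((Real.sqrt (∑ k', ‖Ψ k k'‖ ^ 2) : ℝ) : ℂ) *
          conj ((Real.sqrt (∑ k', ‖Ψ l k'‖ ^ 2) : ℝ) : ℂ))) k j =
        ((Real.sqrt (∑ k', ‖Ψ k k'‖ ^ 2) : ℝ) : ℂ) *
        ((Real.sqrt (∑ k', ‖Ψ j k'‖ ^ 2) : ℝ) : ℂ) *
        ∑ l, X m k l * X n l j * ((∑ l', ‖Ψ l l'‖ ^ 2 : ℝ) : ℂ) := by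
      rw [Matrix.mul_apply, Finset.mul_sum]
      refine Finset.sum_congr rfl fun l _ => ?_
      have h2 : ((∑ l', ‖Ψ l l'‖ ^ 2 : ℝ) : ℂ) =
          ((Real.sqrt (∑ k', ‖Ψ l k'‖ ^ 2) : ℝ) : ℂ) *
          ((Real.sqrt (∑ k', ‖Ψ l k'‖ ^ 2) : ℝ) : ℂ) := by
        rw [← Complex.ofReal_mul, Real.mul_self_sqrt (hp l)]
      rw [h2]
      simp only [Matrix.of_apply, Complex.conj_ofReal]
      ring
    rw [key, Matrix.zero_apply]
    by_cases hk : Real.sqrt (∑ k', ‖Ψ k k'‖ ^ 2) = 0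
    · rw [hk]; simp
    by_cases hj : Real.sqrt (∑ k', ‖Ψ j k'‖ ^ 2) = 0
    · rw [hj]; simp
    obtain ⟨k', hk'⟩ := hex k hk
    obtain ⟨j', hj'⟩ := hex j hj
    have h := congrFun (congrFun (horth m n hmn) (k, k')) (j, j')
    rw [Matrix.mul_apply, Fintype.sum_prod_type, Matrix.zero_apply] at h
    have h3 : Ψ k k' * conj (Ψ j j') *
        ∑ l, X m k l * X n l j * ((∑ l', ‖Ψ l l'‖ ^ 2 : ℝ) : ℂ) = 0 := by
      rw [← h, Finset.mul_sum]
      refine Finset.sum_congr rfl fun l _ => ?_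
      rw [Complex.ofReal_sum, Finset.mul_sum, Finset.mul_sum]
      refine Finset.sum_congr rfl fun l' _ => ?_
      simp only [Matrix.of_apply]
      rw [Complex.ofReal_pow, ← Complex.conj_mul']
      ring
    have hj2 : conj (Ψ j j') ≠ 0 := by simpa using hj'
    rw [(mul_eq_zero.mp h3).resolve_left (mul_ne_zero hk' hj2), mul_zero]
end

section
/- Let X⁽¹⁾, …, X⁽ᴹ⁾ be d×d correlation matrices and let Ψ be a d×d complex matrix with Frobenius norm 1. For each n define the (d·d)×(d·d) matrix ρ⁽ⁿ⁾, indexed by pairs, with entries ρ⁽ⁿ⁾_{(k,k'),(l,l')} = X⁽ⁿ⁾_{k,l} · Ψ_{k,k'} · conj(Ψ_{l,l'}). If ρ⁽ᵐ⁾ · ρ⁽ⁿ⁾ = 0 for all m ≠ n, then M ≤ d. (The maximal set of perfectly distinguishable Schur-product channels, even with entangled inputs, has size at most d; equivalently, the identity classical action has distinguishability number d.) -/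
open scoped Matrix ComplexConjugate ComplexOrder

theorem stmt_12 (d M : ℕ)
    (X : Fin M → Matrix (Fin d) (Fin d) ℂ)
    (hXpsd : ∀ n, (X n).PosSemidef)
    (hXdiag : ∀ (n : Fin M) (k : Fin d), X n k k = 1)
    (Ψ : Matrix (Fin d) (Fin d) ℂ)
    (hΨ : ∑ k, ∑ k', ‖Ψ k k'‖ ^ 2 = 1)
    (horth : ∀ m n : Fin M, m ≠ n →
      (Matrix.of fun pq rs : Fin d × Fin d =>
        X m pq.1 rs.1 * Ψ pq.1 pq.2 * conj (Ψ rs.1 rs.2)) *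
      (Matrix.of fun pq rs : Fin d × Fin d =>
        X n pq.1 rs.1 * Ψ pq.1 pq.2 * conj (Ψ rs.1 rs.2)) = 0) :
    M ≤ d := by
  classical
  -- pick a nonzero coefficient of Ψ
  obtain ⟨k, k', hk⟩ : ∃ k k', Ψ k k' ≠ 0 := by
    by_contra! h
    simp [h] at hΨ
  -- the weights of the marginal
  set p : Fin d → ℝ := fun r => ∑ r', ‖Ψ r r'‖ ^ 2 with hp
  have hp0 : ∀ r, 0 ≤ p r := fun r => Finset.sum_nonneg fun _ _ => by positivity
  have hpk : 0 < p k :=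
    Finset.sum_pos' (fun _ _ => by positivity) ⟨k', Finset.mem_univ _, by positivity⟩
  -- orthogonality of the weighted columns
  have key : ∀ m n : Fin M, m ≠ n → ∑ r, X m k r * ((p r : ℂ) * X n r k) = 0 := by
    intro m n hmn
    have h := congrFun (congrFun (horth m n hmn) (k, k')) (k, k')
    rw [Matrix.mul_apply, Fintype.sum_prod_type] at h
    simp only [Matrix.of_apply, Matrix.zero_apply] at h
    have h2 : (Ψ k k' * conj (Ψ k k')) * ∑ r, X m k r * ((p r : ℂ) * X n r k) = 0 := by
      rw [← h, Finset.mul_sum]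
      refine Finset.sum_congr rfl fun r _ => ?_
      simp only [hp]
      push_cast
      rw [Finset.sum_mul, Finset.mul_sum, Finset.mul_sum]
      refine Finset.sum_congr rfl fun r' _ => ?_
      rw [← Complex.mul_conj']
      ring
    rcases mul_eq_zero.mp h2 with h3 | h3
    · exact absurd h3 (mul_ne_zero hk ((map_ne_zero _).mpr hk))
    · exact h3
  have diag : ∀ n : Fin M, ∑ r, X n k r * ((p r : ℂ) * X n r k) ≠ 0 := by
    intro n h
    have h1 : ∑ r, X n k r * ((p r : ℂ) * X n r k)
        = ((∑ r, p r * ‖X n k r‖ ^ 2 : ℝ) : ℂ) := by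
      push_cast
      refine Finset.sum_congr rfl fun r _ => ?_
      rw [← (hXpsd n).isHermitian.apply r k, ← Complex.mul_conj']
      simp only [Complex.star_def]
      ring
    rw [h1, Complex.ofReal_eq_zero] at h
    have h2 : 0 < ∑ r, p r * ‖X n k r‖ ^ 2 :=
      Finset.sum_pos' (fun r _ => mul_nonneg (hp0 r) (by positivity))
        ⟨k, Finset.mem_univ _, by simpa [hXdiag n k] using hpk⟩
    exact h2.ne' h
  have li : LinearIndependent ℂ (fun (n : Fin M) (r : Fin d) => (p r : ℂ) * X n r k) := by
    rw [Fintype.linearIndependent_iff]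
    intro c hc m
    have h1 : ∑ n, c n * ∑ r, X m k r * ((p r : ℂ) * X n r k) = 0 := by
      have h2 : ∀ r, ∑ n, c n * ((p r : ℂ) * X n r k) = 0 := fun r => by
        simpa using congrFun hc r
      calc ∑ n, c n * ∑ r, X m k r * ((p r : ℂ) * X n r k)
          = ∑ r, X m k r * ∑ n, c n * ((p r : ℂ) * X n r k) := by
            simp only [Finset.mul_sum]
            rw [Finset.sum_comm]
            refine Finset.sum_congr rfl fun r _ => Finset.sum_congr rfl fun n _ => ?_
            ring
        _ = 0 := by simp [h2]
    rw [Finset.sum_eq_single m (fun n _ hn => by rw [key m n hn.symm, mul_zero])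
      (fun h => absurd (Finset.mem_univ _) h)] at h1
    exact (mul_eq_zero.mp h1).resolve_right (diag m)
  simpa using li.fintype_card_le_finrank
end

section
/- Let λ be a probability vector of dimension d and let T be the circulant bistochastic matrix with entries T_{k,l} = λ_{(k−l) mod d}. Then there exist d positive semidefinite complex matrices J⁽¹⁾, …, J⁽ᵈ⁾ of size d², indexed by Fin d × Fin d, such that for every n: (J⁽ⁿ⁾)_{(k,l),(k,l)} = T_{k,l}/d for all k, l, and ∑ₖ (J⁽ⁿ⁾)_{(k,i),(k,j)} = δᵢⱼ/d for all i, j; and which are pairwise orthogonal: J⁽ᵐ⁾ · J⁽ⁿ⁾ = 0 for all m ≠ n. (Every circulant classical action T admits d perfectly distinguishable quantum channels.) -/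
open scoped Matrix ComplexConjugate ComplexOrder

theorem stmt_15 (d : ℕ) (hd : 0 < d)
    (lam : Fin d → ℝ) (hlam0 : ∀ k, 0 ≤ lam k) (hlam1 : ∑ k, lam k = 1)
    (T : Matrix (Fin d) (Fin d) ℝ) (hT : ∀ k l : Fin d, T k l = lam (k - l)) :
    ∃ J : Fin d → Matrix (Fin d × Fin d) (Fin d × Fin d) ℂ,
      (∀ n, (J n).PosSemidef) ∧
      (∀ (n : Fin d) (k l : Fin d), J n (k, l) (k, l) = (T k l : ℂ) / d) ∧
      (∀ (n : Fin d) (i j : Fin d),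
        ∑ k, J n (k, i) (k, j) = (if i = j then 1 else 0) / d) ∧
      (∀ m n : Fin d, m ≠ n → J m * J n = 0) := by
  have : NeZero d := ⟨hd.ne'⟩
  have hw := Complex.isPrimitiveRoot_exp d hd.ne'
  set w : ℂ := Complex.exp (2 * Real.pi * Complex.I / d) with hwdef
  have hcw : w * conj w = 1 := by
    rw [Complex.mul_conj, Complex.normSq_eq_norm_sq, hw.norm'_eq_one hd.ne']
    simp
  have hzz : ∀ a : ℕ, w ^ a * conj (w ^ a) = 1 := by
    intro a
    rw [map_pow, ← mul_pow, hcw, one_pow]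
  have horth : ∀ m n : Fin d, m ≠ n →
      ∑ k : Fin d, conj (w ^ ((m : ℕ) * (k : ℕ))) * w ^ ((n : ℕ) * (k : ℕ)) = 0 := by
    intro m n hmn
    set r : ℂ := conj (w ^ (m : ℕ)) * w ^ (n : ℕ) with hr
    have hr1 : r ≠ 1 := by
      intro h
      apply hmn
      have h2 : w ^ (m : ℕ) * r = w ^ (n : ℕ) := by
        rw [hr, ← mul_assoc, hzz, one_mul]
      rw [h, mul_one] at h2
      exact Fin.ext (hw.pow_inj m.2 n.2 h2)
    have hrd : r ^ d = 1 := by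
      rw [hr, mul_pow, ← map_pow, ← pow_mul, ← pow_mul, mul_comm, mul_comm (m : ℕ),
        mul_comm (n : ℕ), pow_mul, pow_mul, hw.pow_eq_one]
      simp
    have : ∀ k : Fin d, conj (w ^ ((m : ℕ) * (k : ℕ))) * w ^ ((n : ℕ) * (k : ℕ))
        = r ^ (k : ℕ) := by
      intro k
      rw [hr, mul_pow, pow_mul, pow_mul, map_pow]
    rw [Finset.sum_congr rfl (fun k _ => this k), Fin.sum_univ_eq_sum_range (fun k => r ^ k),
      geom_sum_eq hr1, hrd]
    simp
  have hs : ∀ a : Fin d, ((Real.sqrt (lam a / d) : ℝ) : ℂ) * (Real.sqrt (lam a / d) : ℝ)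
      = (lam a : ℂ) / d := by
    intro a
    rw [← Complex.ofReal_mul, Real.mul_self_sqrt (div_nonneg (hlam0 a) (Nat.cast_nonneg d))]
    simp
  obtain ⟨A, hA⟩ : ∃ A : Fin d → Matrix (Fin d × Fin d) (Fin d) ℂ, ∀ n k l a, A n (k, l) a =
      if k - l = a then ((Real.sqrt (lam a / d) : ℝ) : ℂ) * w ^ ((n : ℕ) * (k : ℕ)) else 0 :=
    ⟨fun n => Matrix.of fun p a => if p.1 - p.2 = a then
      ((Real.sqrt (lam a / d) : ℝ) : ℂ) * w ^ ((n : ℕ) * (p.1 : ℕ)) else 0, fun n k l a => rfl⟩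
  have hJ : ∀ n k i j, (A n * (A n)ᴴ) (k, i) (k, j)
      = if i = j then (lam (k - i) : ℂ) / d else 0 := by
    intro n k i j
    rw [Matrix.mul_apply, Finset.sum_eq_single (k - i)]
    · simp only [hA, Matrix.conjTranspose_apply, if_true]
      by_cases h : i = j
      · subst h
        simp only [if_true]
        rw [star_mul', ← hs (k - i)]
        have := hzz ((n : ℕ) * (k : ℕ))
        rw [Complex.star_def, Complex.conj_ofReal]
        linear_combination ((Real.sqrt (lam (k - i) / d) : ℝ) : ℂ) *
          (Real.sqrt (lam (k - i) / d) : ℝ) * this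
      · have h' : ¬ (k - j = k - i) := fun e => h (sub_right_injective e).symm
        simp [h, h']
    · intro b _ hb
      simp only [hA]
      rw [if_neg (Ne.symm hb), zero_mul]
    · simp
  refine ⟨fun n => A n * (A n)ᴴ, fun n => Matrix.posSemidef_self_mul_conjTranspose _, ?_, ?_, ?_⟩
  · intro n k l
    refine (hJ n k l l).trans ?_
    rw [if_pos rfl, hT]
  · intro n i j
    rw [Finset.sum_congr rfl (fun k _ => hJ n k i j)]
    by_cases h : i = j
    · simp only [h, if_true]
      have e : ∑ k, (lam (k - j) : ℂ) = ∑ k, (lam k : ℂ) :=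
        Equiv.sum_comp (Equiv.subRight j) (fun k => (lam k : ℂ))
      rw [← Finset.sum_div, e, ← Complex.ofReal_sum, hlam1]
      simp
    · simp [h]
  · intro m n hmn
    have key : (A m)ᴴ * A n = 0 := by
      ext a b
      rw [Matrix.mul_apply, Fintype.sum_prod_type]
      by_cases hab : a = b
      · subst hab
        have : ∀ k : Fin d, ∑ l : Fin d, (A m)ᴴ a (k, l) * A n (k, l) a
            = ((lam a : ℂ) / d) *
              (conj (w ^ ((m : ℕ) * (k : ℕ))) * w ^ ((n : ℕ) * (k : ℕ))) := by
          intro k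
          rw [Finset.sum_eq_single (k - a)]
          · simp only [hA, Matrix.conjTranspose_apply, sub_sub_cancel, if_true]
            rw [star_mul', ← hs a, Complex.star_def, Complex.conj_ofReal]
            ring
          · intro l _ hl
            have : ¬ (k - l = a) := fun e => hl (by rw [← e, sub_sub_cancel])
            simp [hA, this]
          · simp
        rw [Finset.sum_congr rfl (fun k _ => this k), ← Finset.mul_sum, horth m n hmn]
        simp
      · apply Finset.sum_eq_zero
        intro k _
        apply Finset.sum_eq_zero
        intro l _
        simp only [hA, Matrix.conjTranspose_apply]
        by_cases h1 : k - l = a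
        · have : ¬ (k - l = b) := fun e => hab (h1.symm.trans e)
          simp [this]
        · simp [h1]
    show A m * (A m)ᴴ * (A n * (A n)ᴴ) = 0
    rw [Matrix.mul_assoc, ← Matrix.mul_assoc (A m)ᴴ, key]
    simp
end

section
/- Let U and V be 2×2 unitary matrices and let ρ be a 2×2 positive semidefinite complex matrix with trace 1. If Tr(V† U ρ) = 0, then Tr(V† U) = 0. (Two qubit unitary channels that are perfectly distinguishable with the help of any entangled input state are necessarily Hilbert–Schmidt orthogonal, and hence are perfectly distinguishable already with the maximally entangled input.) -/
open scoped Matrix ComplexConjugate ComplexOrder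

theorem stmt_16 (U V ρ : Matrix (Fin 2) (Fin 2) ℂ)
    (hU : U ∈ Matrix.unitaryGroup (Fin 2) ℂ)
    (hV : V ∈ Matrix.unitaryGroup (Fin 2) ℂ)
    (hρ : ρ.PosSemidef) (htr : ρ.trace = 1)
    (h : (Vᴴ * U * ρ).trace = 0) :
    (Vᴴ * U).trace = 0 := by
  have hW : (Vᴴ * U) * (Vᴴ * U)ᴴ = 1 := by
    have h1 : U * Uᴴ = 1 := Matrix.mem_unitaryGroup_iff.mp hU
    have h2 : Vᴴ * V = 1 := Matrix.mem_unitaryGroup_iff'.mp hV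
    rw [Matrix.conjTranspose_mul, Matrix.conjTranspose_conjTranspose, Matrix.mul_assoc,
      ← Matrix.mul_assoc U, h1, Matrix.one_mul, h2]
  generalize Vᴴ * U = W at *
  have hadj : W.adjugate = W.det • Wᴴ := by
    calc W.adjugate = W.adjugate * (W * Wᴴ) := by rw [hW, Matrix.mul_one]
      _ = W.det • Wᴴ := by
        rw [← Matrix.mul_assoc, Matrix.adjugate_mul, Matrix.smul_mul, Matrix.one_mul]
  have hCH : W + W.adjugate = W.trace • (1 : Matrix (Fin 2) (Fin 2) ℂ) := by
    ext i j
    fin_cases i <;> fin_cases j <;>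
      simp [Matrix.adjugate_fin_two, Matrix.trace_fin_two, add_comm]
  have hconj : (Wᴴ * ρ).trace = 0 := by
    have h3 : ((W * ρ)ᴴ).trace = 0 := by rw [Matrix.trace_conjTranspose, h, star_zero]
    rwa [Matrix.conjTranspose_mul, hρ.isHermitian.eq, Matrix.trace_mul_comm] at h3
  have h4 := congrArg (fun M => (M * ρ).trace) hCH
  simp only [hadj, Matrix.add_mul, Matrix.smul_mul, Matrix.trace_add, Matrix.trace_smul, h,
    hconj, Matrix.one_mul, htr, smul_eq_mul, mul_zero, mul_one, add_zero] at h4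
  exact h4.symm
end

section
/- Let a ∈ [0,1]. There exist three 2×2 unitary matrices U₁, U₂, U₃ with |(Uₙ)₁₁|² = |(Uₙ)₂₂|² = a and |(Uₙ)₁₂|² = |(Uₙ)₂₁|² = 1 − a for each n, which are pairwise Hilbert–Schmidt orthogonal (Tr(Uₘ† Uₙ) = 0 for m ≠ n), if and only if 1/3 ≤ a ≤ 2/3. -/
open scoped Matrix

/-- The quaternionic (special unitary up to scale) matrix with first row `(x, y)`. -/
noncomputable def quatMat (x y : ℂ) : Matrix (Fin 2) (Fin 2) ℂ :=
  !![x, y; -(starRingEnd ℂ y), starRingEnd ℂ x]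

lemma quatMat_mem (x y : ℂ) (h : ‖x‖ ^ 2 + ‖y‖ ^ 2 = 1) :
    quatMat x y ∈ Matrix.unitaryGroup (Fin 2) ℂ := by
  rw [Matrix.mem_unitaryGroup_iff]
  rw [← Complex.normSq_eq_norm_sq, ← Complex.normSq_eq_norm_sq, Complex.normSq_apply,
    Complex.normSq_apply] at h
  ext i j
  fin_cases i <;> fin_cases j <;>
    simp [quatMat, Matrix.mul_apply, Fin.sum_univ_two, Complex.ext_iff] <;>
    first
      | (constructor <;> linarith)
      | (constructor <;> ring)

lemma quatMat_trace (x y z w : ℂ)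
    (h : x.re * z.re + x.im * z.im + y.re * w.re + y.im * w.im = 0) :
    ((quatMat x y)ᴴ * quatMat z w).trace = 0 := by
  simp [quatMat, Matrix.trace, Matrix.mul_apply, Fin.sum_univ_two, Complex.ext_iff]
  constructor
  · linarith
  · ring

lemma bessel_entry (U : Fin 3 → Matrix (Fin 2) (Fin 2) ℂ) (c : ℝ) (i j : Fin 2)
    (hn : ∀ n, ‖U n 0 0‖ ^ 2 + ‖U n 0 1‖ ^ 2 + ‖U n 1 0‖ ^ 2 + ‖U n 1 1‖ ^ 2 = 2)
    (hc : ∀ n, ‖U n i j‖ ^ 2 = c)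
    (ho : ∀ m n : Fin 3, m ≠ n → ((U m)ᴴ * U n).trace = 0) : c ≤ 2 / 3 := by
  let v : Fin 3 → EuclideanSpace ℂ (Fin 2 × Fin 2) := fun n =>
    WithLp.toLp 2 (fun p => ((Real.sqrt 2 : ℝ) : ℂ)⁻¹ * U n p.1 p.2)
  have h2 : (Real.sqrt 2) ^ 2 = 2 := Real.sq_sqrt (by norm_num)
  have hv : Orthonormal ℂ v := by
    constructor
    · intro n
      have : ‖v n‖ ^ 2 = 1 := by
        rw [EuclideanSpace.norm_sq_eq]
        simp only [v, Fintype.sum_prod_type, Fin.sum_univ_two, norm_mul, norm_inv, mul_pow, inv_pow,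
          Complex.norm_real, Real.norm_eq_abs, sq_abs, h2]
        linarith [hn n]
      nlinarith [norm_nonneg (v n)]
    · intro m n hmn
      have := ho m n hmn
      simp [Matrix.trace, Matrix.mul_apply, Fin.sum_univ_two] at this
      simp [v, PiLp.inner_apply, Fintype.sum_prod_type, Fin.sum_univ_two]
      linear_combination (((Real.sqrt 2 : ℝ) : ℂ)⁻¹) ^ 2 * this
  have hb := hv.sum_inner_products_le (EuclideanSpace.single (i, j) (1 : ℂ)) (s := Finset.univ)
  have key : ∀ n, ‖inner ℂ (v n) (EuclideanSpace.single (i, j) (1 : ℂ))‖ ^ 2 = c / 2 := by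
    intro n
    rw [EuclideanSpace.inner_single_right]
    simp only [v, one_mul, RCLike.norm_conj, norm_mul, norm_inv, mul_pow, inv_pow,
          Complex.norm_real, Real.norm_eq_abs, sq_abs, h2, hc]
    ring
  simp only [key, EuclideanSpace.norm_single] at hb
  simp at hb
  linarith

theorem stmt_17 (a : ℝ) (ha0 : 0 ≤ a) (ha1 : a ≤ 1) :
    (∃ U : Fin 3 → Matrix (Fin 2) (Fin 2) ℂ,
      (∀ n, U n ∈ Matrix.unitaryGroup (Fin 2) ℂ) ∧
      (∀ n, ‖U n 0 0‖ ^ 2 = a ∧ ‖U n 1 1‖ ^ 2 = a ∧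
            ‖U n 0 1‖ ^ 2 = 1 - a ∧ ‖U n 1 0‖ ^ 2 = 1 - a) ∧
      (∀ m n : Fin 3, m ≠ n → ((U m)ᴴ * U n).trace = 0)) ↔
    (1 / 3 ≤ a ∧ a ≤ 2 / 3) := by
  constructor
  · rintro ⟨U, -, hU, ho⟩
    have hn : ∀ n, ‖U n 0 0‖ ^ 2 + ‖U n 0 1‖ ^ 2 + ‖U n 1 0‖ ^ 2 + ‖U n 1 1‖ ^ 2 = 2 := by
      intro n
      obtain ⟨h1, h2, h3, h4⟩ := hU n
      linarith
    have h1 := bessel_entry U a 0 0 hn (fun n => (hU n).1) ho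
    have h2 := bessel_entry U (1 - a) 0 1 hn (fun n => (hU n).2.2.1) ho
    constructor <;> linarith
  · rintro ⟨h1, h2⟩
    have hA : √a ^ 2 = a := Real.sq_sqrt ha0
    have hB : √(1 - a) ^ 2 = 1 - a := Real.sq_sqrt (by linarith)
    have hS : √(1 / 2 : ℝ) ^ 2 = 1 / 2 := Real.sq_sqrt (by norm_num)
    have hQ : √(a - (1 - a) / 2) ^ 2 = a - (1 - a) / 2 := Real.sq_sqrt (by linarith)
    have hT : √((1 - a) - a / 2) ^ 2 = (1 - a) - a / 2 := Real.sq_sqrt (by linarith)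
    generalize √a = A at *
    generalize √(1 - a) = B at *
    generalize √(1 / 2 : ℝ) = S at *
    generalize √(a - (1 - a) / 2) = Q at *
    generalize √((1 - a) - a / 2) = T at *
    have hSB : (S * B) ^ 2 = (1 - a) / 2 := by rw [mul_pow, hS, hB]; ring
    have hSA : (S * A) ^ 2 = a / 2 := by rw [mul_pow, hS, hA]; ring
    let x : Fin 3 → ℂ := ![⟨A, 0⟩, ⟨S * B, Q⟩, ⟨S * B, -Q⟩]
    let y : Fin 3 → ℂ := ![⟨B, 0⟩, ⟨-(S * A), T⟩, ⟨-(S * A), -T⟩]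
    have hx : ∀ n, ‖x n‖ ^ 2 = a := by
      intro n
      rw [← Complex.normSq_eq_norm_sq, Complex.normSq_apply]
      fin_cases n <;> simp [x] <;> nlinarith
    have hy : ∀ n, ‖y n‖ ^ 2 = 1 - a := by
      intro n
      rw [← Complex.normSq_eq_norm_sq, Complex.normSq_apply]
      fin_cases n <;> simp [y] <;> nlinarith
    refine ⟨fun n => quatMat (x n) (y n), fun n => quatMat_mem _ _ ?_, fun n => ?_, ?_⟩
    · rw [hx, hy]; ring
    · simp [quatMat, hx, hy]
    · intro m n hmn
      apply quatMat_trace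
      fin_cases m <;> fin_cases n <;> first
        | exact absurd rfl hmn
        | (simp [x, y]; nlinarith)
end

section
/- Let a ∈ [0,1]. There exist four 2×2 unitary matrices U₁, U₂, U₃, U₄ with |(Uₙ)₁₁|² = |(Uₙ)₂₂|² = a and |(Uₙ)₁₂|² = |(Uₙ)₂₁|² = 1 − a for each n, which are pairwise Hilbert–Schmidt orthogonal (Tr(Uₘ† Uₙ) = 0 for m ≠ n), if and only if a = 1/2. (The van der Waerden qubit classical action is the unique bistochastic qubit action with distinguishability number 4.) -/
open scoped Matrix

theorem stmt_18 (a : ℝ) (ha0 : 0 ≤ a) (ha1 : a ≤ 1) :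
    (∃ U : Fin 4 → Matrix (Fin 2) (Fin 2) ℂ,
      (∀ n, U n ∈ Matrix.unitaryGroup (Fin 2) ℂ) ∧
      (∀ n, ‖U n 0 0‖ ^ 2 = a ∧ ‖U n 1 1‖ ^ 2 = a ∧
            ‖U n 0 1‖ ^ 2 = 1 - a ∧ ‖U n 1 0‖ ^ 2 = 1 - a) ∧
      (∀ m n : Fin 4, m ≠ n → ((U m)ᴴ * U n).trace = 0)) ↔
    a = 1 / 2 := by
  constructor
  · rintro ⟨U, -, hN, hO⟩
    have key : ∀ z : ℂ, z * star z = ((‖z‖ ^ 2 : ℝ) : ℂ) := by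
      intro z
      have := Complex.mul_conj z
      rw [Complex.normSq_eq_norm_sq] at this
      exact this
    let V : Matrix (Fin 4) (Fin 4) ℂ :=
      Matrix.of fun n => ![U n 0 0, U n 0 1, U n 1 0, U n 1 1]
    have h1 : V * ((1 / 2 : ℂ) • Vᴴ) = 1 := by
      ext m n
      have e : (V * ((1 / 2 : ℂ) • Vᴴ)) m n = (1 / 2 : ℂ) *
          (U m 0 0 * star (U n 0 0) + U m 0 1 * star (U n 0 1)
            + U m 1 0 * star (U n 1 0) + U m 1 1 * star (U n 1 1)) := by
        simp [V, Matrix.mul_apply, Fin.sum_univ_four]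
        ring
      rw [e]
      by_cases h : m = n
      · subst h
        obtain ⟨h00, h11, h01, h10⟩ := hN m
        rw [key, key, key, key, h00, h11, h01, h10, Matrix.one_apply_eq]
        push_cast
        ring
      · rw [Matrix.one_apply_ne h]
        have := hO n m (Ne.symm h)
        simp only [Matrix.trace, Matrix.diag, Matrix.mul_apply, Fin.sum_univ_two,
          Matrix.conjTranspose_apply] at this
        linear_combination (1 / 2 : ℂ) * this
    have h2 := mul_eq_one_comm.mp h1
    have h3 := congrFun (congrFun h2 0) 0
    have e : (((1 / 2 : ℂ) • Vᴴ) * V) 0 0 = (1 / 2 : ℂ) *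
          (U 0 0 0 * star (U 0 0 0) + U 1 0 0 * star (U 1 0 0)
            + U 2 0 0 * star (U 2 0 0) + U 3 0 0 * star (U 3 0 0)) := by
      simp [V, Matrix.mul_apply, Fin.sum_univ_four]
      ring
    rw [e, key, key, key, key, (hN 0).1, (hN 1).1, (hN 2).1, (hN 3).1,
      Matrix.one_apply_eq] at h3
    have h4 : (1 / 2 : ℝ) * (a + a + a + a) = 1 := by
      apply Complex.ofReal_injective
      push_cast
      exact h3
    linarith
  · rintro rfl
    obtain ⟨s, hs, hs'⟩ : ∃ s : ℝ, s * s = 1 / 2 ∧ s ^ 2 = 1 / 2 :=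
      ⟨√(1 / 2), Real.mul_self_sqrt (by norm_num), Real.sq_sqrt (by norm_num)⟩
    have hc : (s : ℂ) * s = 1 / 2 := by
      rw [← Complex.ofReal_mul, hs]; norm_num
    refine ⟨![!![-s, s; s, s], !![s, -s; s, s], !![s, s; -s, s], !![s, s; s, -s]], ?_, ?_, ?_⟩
    · intro n
      rw [Matrix.mem_unitaryGroup_iff]
      ext i j
      fin_cases n <;> fin_cases i <;> fin_cases j <;>
        simp [Matrix.mul_apply, Fin.sum_univ_two, Matrix.star_apply, hc] <;> norm_num
    · intro n
      fin_cases n <;> norm_num [hs']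
    · intro m n h
      fin_cases m <;> fin_cases n <;>
        first
        | exact absurd rfl h
        | (simp [Matrix.trace, Matrix.mul_apply, Fin.sum_univ_two, hc])
end

section
/- Let p be an odd prime, set d = p − 1, and let U be a d×d unitary matrix with |Uᵢⱼ|² = 2/p when i = j and |Uᵢⱼ|² = 1/p when i ≠ j (so the classical action of U is T = (W + 𝟙)/p with W the all-ones matrix). For k ∈ {0, 1, …, p−1} let E⁽ᵏ⁾ be the d×d diagonal unitary with entries E⁽ᵏ⁾ⱼⱼ = exp(2πi·j·k/p) for j ∈ {0,…,d−1}, and set M⁽ᵏ⁾ = E⁽ᵏ⁾ U E⁽ᵏ⁾. Then the p unitaries M⁽⁰⁾, …, M⁽ᵖ⁻¹⁾ are pairwise Hilbert–Schmidt orthogonal: Tr((M⁽ˡ⁾)† M⁽ᵏ⁾) = 0 for all k ≠ l. (Whenever T = (W+𝟙)/p is unistochastic this exhibits d + 1 perfectly distinguishable unitary channels with the same classical action T.) -/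
open scoped Matrix

lemma aux_geom (p : ℕ) (hp : 0 < p) (w : ℂ) (hw : w ^ p = 1) (h1 : w ≠ 1) :
    ∑ i : Fin (p - 1), w ^ (i : ℕ) = - w ^ (p - 1) := by
  rw [Fin.sum_univ_eq_sum_range (fun i => w ^ i)]
  have h := geom_sum_eq h1 p
  rw [hw, sub_self, zero_div] at h
  obtain ⟨q, rfl⟩ : ∃ q, p = q + 1 := ⟨p - 1, by omega⟩
  rw [Finset.sum_range_succ] at h
  simp only [Nat.add_sub_cancel]
  linear_combination h

theorem stmt_19 (p : ℕ) (hp : p.Prime) (hodd : Odd p)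
    (U : Matrix (Fin (p - 1)) (Fin (p - 1)) ℂ)
    (hU : U ∈ Matrix.unitaryGroup (Fin (p - 1)) ℂ)
    (hmod : ∀ i j : Fin (p - 1),
      ‖U i j‖ ^ 2 = if i = j then 2 / (p : ℝ) else 1 / (p : ℝ))
    (E : Fin p → Matrix (Fin (p - 1)) (Fin (p - 1)) ℂ)
    (hE : ∀ k : Fin p, E k = Matrix.diagonal fun j : Fin (p - 1) =>
      Complex.exp (2 * Real.pi * Complex.I * (j : ℕ) * (k : ℕ) / p)) :
    ∀ k l : Fin p, k ≠ l →
      ((E l * U * E l)ᴴ * (E k * U * E k)).trace = 0 := by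
  intro k l hkl
  have hp0 : (p : ℂ) ≠ 0 := by exact_mod_cast hp.ne_zero
  obtain ⟨w, hwdef⟩ : ∃ w : ℂ, w = Complex.exp (2 * Real.pi * Complex.I * ((k : ℕ) - (l : ℕ)) / p) :=
    ⟨_, rfl⟩
  have hwp : w ^ p = 1 := by
    rw [hwdef, ← Complex.exp_nat_mul, Complex.exp_eq_one_iff]
    refine ⟨((k : ℕ) : ℤ) - ((l : ℕ) : ℤ), ?_⟩
    push_cast
    field_simp
  have hw2 : w ^ 2 ≠ 1 := by
    rw [hwdef, ← Complex.exp_nat_mul, Ne, Complex.exp_eq_one_iff]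
    rintro ⟨n, hn⟩
    have h2 : (2 : ℂ) * ((k : ℕ) - (l : ℕ)) = n * p := by
      have hpi : (2 * Real.pi * Complex.I : ℂ) ≠ 0 := Complex.two_pi_I_ne_zero
      apply mul_left_cancel₀ hpi
      field_simp at hn
      push_cast at hn
      linear_combination (2 * Real.pi * Complex.I : ℂ) * hn
    have h3 : (2 : ℤ) * (((k : ℕ) : ℤ) - ((l : ℕ) : ℤ)) = n * p := by exact_mod_cast h2
    have h4 : (p : ℤ) ∣ 2 * (((k : ℕ) : ℤ) - ((l : ℕ) : ℤ)) := ⟨n, by rw [h3]; ring⟩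
    have hc : IsCoprime (p : ℤ) 2 := by
      have := Nat.isCoprime_iff_coprime.mpr (Nat.coprime_two_right.mpr hodd)
      exact_mod_cast this
    have h5 := hc.dvd_of_dvd_mul_left h4
    have h6 := Int.eq_zero_of_abs_lt_dvd h5 (by
      have := k.2
      have := l.2
      rw [abs_lt]; constructor <;> omega)
    apply hkl
    ext
    omega
  have hw1 : w ≠ 1 := by
    rintro rfl
    simp at hw2
  have hent : ∀ j : Fin (p - 1),
      star (Complex.exp (2 * Real.pi * Complex.I * (j : ℕ) * (l : ℕ) / p)) *
        Complex.exp (2 * Real.pi * Complex.I * (j : ℕ) * (k : ℕ) / p) = w ^ (j : ℕ) := by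
    intro j
    rw [hwdef, ← Complex.exp_nat_mul, Complex.star_def, ← Complex.exp_conj, ← Complex.exp_add]
    congr 1
    have h2 : (starRingEnd ℂ) 2 = 2 := map_ofNat _ 2
    simp [h2]
    ring
  have hS1 := aux_geom p hp.pos w hwp hw1
  have hS2 := aux_geom p hp.pos (w ^ 2) (by rw [← pow_mul, mul_comm, pow_mul, hwp, one_pow]) hw2
  have hUU : ∀ i j, star (U i j) * U i j = (1 / (p : ℂ)) * (1 + if i = j then 1 else 0) := by
    intro i j
    rw [Complex.star_def, Complex.conj_mul', ← Complex.ofReal_pow, hmod]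
    split_ifs <;> push_cast <;> ring
  have key : ((E l * U * E l)ᴴ * (E k * U * E k)).trace =
      ∑ j : Fin (p - 1), ∑ i : Fin (p - 1),
        (1 / (p : ℂ)) * (w ^ (j : ℕ) * w ^ (i : ℕ) + if i = j then w ^ (j : ℕ) * w ^ (i : ℕ) else 0) := by
    rw [Matrix.trace]
    refine Finset.sum_congr rfl fun j _ => ?_
    rw [Matrix.diag_apply, Matrix.mul_apply]
    refine Finset.sum_congr rfl fun i _ => ?_
    rw [Matrix.conjTranspose_apply, hE, hE, Matrix.mul_diagonal, Matrix.diagonal_mul,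
      Matrix.mul_diagonal, Matrix.diagonal_mul, star_mul', star_mul']
    have h := hUU i j
    rw [← hent i, ← hent j]
    generalize Complex.exp (2 * Real.pi * Complex.I * (j : ℕ) * (k : ℕ) / p) = a
    generalize Complex.exp (2 * Real.pi * Complex.I * (i : ℕ) * (k : ℕ) / p) = b
    generalize star (Complex.exp (2 * Real.pi * Complex.I * (j : ℕ) * (l : ℕ) / p)) = c
    generalize star (Complex.exp (2 * Real.pi * Complex.I * (i : ℕ) * (l : ℕ) / p)) = d
    split_ifs at h ⊢ <;> linear_combination (a * b * c * d) * h
  rw [key]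
  simp only [← Finset.mul_sum, Finset.sum_add_distrib, Finset.sum_ite_eq', Finset.mem_univ, if_true]
  rw [← Finset.sum_mul, hS1]
  have : ∑ i : Fin (p - 1), w ^ (i : ℕ) * w ^ (i : ℕ) = ∑ i : Fin (p - 1), (w ^ 2) ^ (i : ℕ) :=
    Finset.sum_congr rfl fun i _ => by ring
  rw [this, hS2]
  ring
end
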